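/- arXiv:2501.11466 — 6 statements merged into one kernel-verified Lean document; each statement's English description precedes it below -/
import Mathlib

section
/- Let n ≥ 4 and 2 ≤ k ≤ n−2 be integers, and let ρ be a permutation of ℤ/nℤ. If ρ preserves weak separation, i.e. for all k-element subsets I, J of ℤ/nℤ, I ∥ J implies ρ(I) ∥ ρ(J), then ρ belongs to the dihedral group D_n. -/
open Finset

/-- `(a,b,c,d)` is strictly cyclically ordered in `ℤ/nℤ`. -/
def StrictCyclicOrd {n : ℕ} (a b c d : ZMod n) : Prop :=
  0 < (b - a).val ∧ (b - a).val < (c - a).val ∧ (c - a).val < (d - a).val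

/-- `I` and `J` are weakly separated subsets of `ℤ/nℤ`. -/
def WeaklySep {n : ℕ} (I J : Finset (ZMod n)) : Prop :=
  ¬ ∃ a c b d : ZMod n, a ∈ I \ J ∧ c ∈ I \ J ∧ b ∈ J \ I ∧ d ∈ J \ I ∧
      StrictCyclicOrd a b c d

/-- The dihedral group `D_n`, realized as the subgroup of permutations of `ℤ/nℤ`
generated by `σ : i ↦ i + 1` and `τ : i ↦ 2 - i`. -/
def dihedral (n : ℕ) : Subgroup (Equiv.Perm (ZMod n)) :=
  Subgroup.closure {Equiv.addRight (1 : ZMod n), Equiv.subLeft (2 : ZMod n)}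

/-- The set `[m] = {1, …, m} ⊆ ℤ/nℤ` (with `[0] = ∅`). -/
def seg (n m : ℕ) : Finset (ZMod n) := (Finset.Icc 1 m).image (fun t : ℕ => (t : ZMod n))

/-- Rectangle label `I^rec_{i,j} = ([i+j]∖[i]) ∪ ([n]∖[n−k+j])`. -/
def Irec (k n i j : ℕ) : Finset (ZMod n) :=
  (seg n (i + j) \ seg n i) ∪ (seg n n \ seg n (n - k + j))

/-- Checkboard label `I^ch_{i,j} = σ^{−⌈(i+j)/2⌉} I^rec_{i,j}`. -/
def Ich (k n i j : ℕ) : Finset (ZMod n) :=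
  (Irec k n i j).image (fun x => x - (((i + j + 1) / 2 : ℕ) : ZMod n))

/-- Dual rectangle label `Î^rec_{i,j} = [i] ∪ ([k+j]∖[i+j])`. -/
def Drec (k n i j : ℕ) : Finset (ZMod n) :=
  seg n i ∪ (seg n (k + j) \ seg n (i + j))

/-- Dual checkboard label `Î^ch_{i,j} = σ^{−⌈(i+j)/2⌉} Î^rec_{i,j}`. -/
def Dch (k n i j : ℕ) : Finset (ZMod n) :=
  (Drec k n i j).image (fun x => x - (((i + j + 1) / 2 : ℕ) : ZMod n))

/-- The rectangle collection `C^rec_{k,n}`. -/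
def Crec (k n : ℕ) : Finset (Finset (ZMod n)) :=
  ((Finset.range (n - k + 1)) ×ˢ (Finset.range (k + 1))).image (fun p => Irec k n p.1 p.2)

/-- The checkboard collection `C^ch_{k,n}`. -/
def Cch (k n : ℕ) : Finset (Finset (ZMod n)) :=
  ((Finset.range (n - k + 1)) ×ˢ (Finset.range (k + 1))).image (fun p => Ich k n p.1 p.2)

/-- The dual rectangle collection `Ĉ^rec_{k,n}`. -/
def CDrec (k n : ℕ) : Finset (Finset (ZMod n)) :=
  ((Finset.range (k + 1)) ×ˢ (Finset.range (n - k + 1))).image (fun p => Drec k n p.1 p.2)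

/-- The dual checkboard collection `Ĉ^ch_{k,n}`. -/
def CDch (k n : ℕ) : Finset (Finset (ZMod n)) :=
  ((Finset.range (k + 1)) ×ˢ (Finset.range (n - k + 1))).image (fun p => Dch k n p.1 p.2)

/-- `C` is a weakly separated collection of `k`-subsets of `ℤ/nℤ`. -/
def IsWSColl (n k : ℕ) (C : Set (Finset (ZMod n))) : Prop :=
  (∀ I ∈ C, I.card = k) ∧ ∀ I ∈ C, ∀ J ∈ C, WeaklySep I J

/-- `C` is a maximal weakly separated collection of `k`-subsets of `ℤ/nℤ`. -/
def IsMaxWSColl (n k : ℕ) (C : Set (Finset (ZMod n))) : Prop :=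
  IsWSColl n k C ∧ ∀ C' : Set (Finset (ZMod n)), IsWSColl n k C' → C ⊆ C' → C' = C

theorem adj_aux
    (n k : ℕ) (hn : 4 ≤ n) (hk : 2 ≤ k) (hkn : k ≤ n - 2)
    (ρ : Equiv.Perm (ZMod n))
    (hρ : ∀ I J : Finset (ZMod n), I.card = k → J.card = k →
      WeaklySep I J → WeaklySep (I.image ρ) (J.image ρ)) (i : ZMod n) :
    ρ (i + 1) = ρ i + 1 ∨ ρ (i + 1) = ρ i - 1 := by
  haveI : NeZero n := ⟨by omega⟩
  haveI : Fact (1 < n) := ⟨by omega⟩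
  have v1 : (1 : ZMod n).val = 1 := ZMod.val_one n
  have vm1 : (-1 : ZMod n).val = n - 1 := by
    rw [ZMod.val_neg_of_ne_zero, v1]
  have h10 : (1 : ZMod n) ≠ 0 := one_ne_zero
  have h2 : (1 : ZMod n) ≠ -1 := by
    intro h
    have := congrArg ZMod.val h
    omega
  by_contra hcon
  push Not at hcon
  obtain ⟨hc1, hc2⟩ := hcon
  have hii : i + 1 ≠ i := by simp
  have hne : ρ (i + 1) ≠ ρ i := fun h => hii (ρ.injective h)
  obtain ⟨b, hb⟩ := ρ.surjective (ρ i + 1)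
  obtain ⟨d, hd⟩ := ρ.surjective (ρ i - 1)
  have hbi : b ≠ i := by rintro rfl; simp at hb
  have hdi : d ≠ i := by rintro rfl; simp [eq_sub_iff_add_eq] at hd
  have hbi1 : b ≠ i + 1 := by rintro rfl; exact hc1 hb
  have hdi1 : d ≠ i + 1 := by rintro rfl; exact hc2 hd
  have hbd : b ≠ d := by
    rintro rfl
    rw [hb, sub_eq_add_neg] at hd
    exact h2 (add_left_cancel hd)
  have hcard : k - 2 ≤ (({i, i + 1, b, d} : Finset (ZMod n))ᶜ).card := by
    rw [Finset.card_compl, ZMod.card]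
    have := Finset.card_le_four (a := i) (b := i + 1) (c := b) (d := d)
    omega
  obtain ⟨K, hK, hKc⟩ := Finset.exists_subset_card_eq hcard
  have hKm : ∀ x ∈ K, x ≠ i ∧ x ≠ i + 1 ∧ x ≠ b ∧ x ≠ d := by
    intro x hx
    have := hK hx
    simpa using this
  have hiK : i ∉ K := fun h => (hKm _ h).1 rfl
  have hi1K : i + 1 ∉ K := fun h => (hKm _ h).2.1 rfl
  have hbK : b ∉ K := fun h => (hKm _ h).2.2.1 rfl
  have hdK : d ∉ K := fun h => (hKm _ h).2.2.2 rfl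
  have cI : (insert i (insert (i + 1) K)).card = k := by
    rw [Finset.card_insert_of_notMem, Finset.card_insert_of_notMem hi1K, hKc]
    · omega
    · simp [hiK]
  have cJ : (insert b (insert d K)).card = k := by
    rw [Finset.card_insert_of_notMem, Finset.card_insert_of_notMem hdK, hKc]
    · omega
    · simp [hbK, hbd]
  have hws : WeaklySep (insert i (insert (i + 1) K)) (insert b (insert d K)) := by
    rintro ⟨p, r, q, s, hp, hr, hq, hs, h1, h2', h3⟩
    have hp' : p = i ∨ p = i + 1 := by
      simp only [Finset.mem_sdiff, Finset.mem_insert] at hp; tauto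
    have hr' : r = i ∨ r = i + 1 := by
      simp only [Finset.mem_sdiff, Finset.mem_insert] at hr; tauto
    have hlt := ZMod.val_lt (s - p)
    rcases hp' with rfl | rfl <;> rcases hr' with rfl | rfl
    · simp at h2'
    · rw [add_sub_cancel_left, v1] at h2'; omega
    · rw [show r - (r + 1) = -1 by ring, vm1] at h3; omega
    · simp at h2'
  apply hρ _ _ cI cJ hws
  have hnot : ∀ x (S : Finset (ZMod n)), x ∉ S → ρ x ∉ S.image ρ := by
    intro x S hx h
    obtain ⟨y, hy, hyx⟩ := Finset.mem_image.1 h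
    exact hx (ρ.injective hyx ▸ hy)
  refine ⟨ρ i, ρ (i + 1), ρ b, ρ d, ?_, ?_, ?_, ?_, ?_, ?_, ?_⟩
  · exact Finset.mem_sdiff.2 ⟨Finset.mem_image_of_mem _ (by simp), hnot _ _ (by simp [hbi.symm, hdi.symm, hiK])⟩
  · exact Finset.mem_sdiff.2 ⟨Finset.mem_image_of_mem _ (by simp), hnot _ _ (by simp [hbi1.symm, hdi1.symm, hi1K])⟩
  · exact Finset.mem_sdiff.2 ⟨Finset.mem_image_of_mem _ (by simp), hnot _ _ (by simp [hbi, hbi1, hbK])⟩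
  · exact Finset.mem_sdiff.2 ⟨Finset.mem_image_of_mem _ (by simp), hnot _ _ (by simp [hdi, hdi1, hdK])⟩
  · rw [hb, add_sub_cancel_left, v1]; omega
  · rw [hb, add_sub_cancel_left, v1]
    have a0 : (ρ (i + 1) - ρ i).val ≠ 0 := by
      rw [Ne, ZMod.val_eq_zero, sub_eq_zero]; exact hne
    have a1 : (ρ (i + 1) - ρ i).val ≠ 1 := by
      intro h
      rw [← v1] at h
      exact hc1 (eq_add_of_sub_eq' (ZMod.val_injective n h))
    omega
  · rw [hd, show ρ i - 1 - ρ i = -1 by ring, vm1]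
    have a1 : (ρ (i + 1) - ρ i).val ≠ n - 1 := by
      intro h
      rw [← vm1] at h
      have := eq_add_of_sub_eq' (ZMod.val_injective n h)
      exact hc2 (by rw [this]; ring)
    have := ZMod.val_lt (ρ (i + 1) - ρ i)
    omega

theorem addRight_mem (n : ℕ) (m : ℕ) :
    Equiv.addRight (m : ZMod n) ∈ dihedral n := by
  have h1 : Equiv.addRight (1 : ZMod n) ∈ dihedral n :=
    Subgroup.subset_closure (by simp)
  induction m with
  | zero =>
    have : Equiv.addRight ((0 : ℕ) : ZMod n) = 1 := by ext x; simp
    rw [this]; exact one_mem _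
  | succ m ih =>
    have : Equiv.addRight ((m + 1 : ℕ) : ZMod n) =
        Equiv.addRight (1 : ZMod n) * Equiv.addRight (m : ZMod n) := by
      ext x; simp [add_assoc]
    rw [this]; exact mul_mem h1 ih

/-- a permutation of `ℤ/nℤ` preserving weak separation of `k`-subsets
lies in the dihedral group `D_n`. -/
theorem mem_dihedral_of_preserves_weak_separation
    (n k : ℕ) (hn : 4 ≤ n) (hk : 2 ≤ k) (hkn : k ≤ n - 2)
    (ρ : Equiv.Perm (ZMod n))
    (hρ : ∀ I J : Finset (ZMod n), I.card = k → J.card = k →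
      WeaklySep I J → WeaklySep (I.image ρ) (J.image ρ)) :
    ρ ∈ dihedral n := by
  haveI : NeZero n := ⟨by omega⟩
  haveI : Fact (1 < n) := ⟨by omega⟩
  have adj := adj_aux n k hn hk hkn ρ hρ
  have h2 : (2 : ZMod n) ≠ 0 := by
    intro h
    have h' : ((2 : ℕ) : ZMod n) = 0 := by exact_mod_cast h
    rw [ZMod.natCast_eq_zero_iff] at h'
    have := Nat.le_of_dvd (by norm_num) h'
    omega
  have hne : ∀ i : ZMod n, ρ (i + 1 + 1) ≠ ρ i := by
    intro i h
    have h' := ρ.injective h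
    apply h2
    rw [add_assoc, add_eq_left] at h'
    rw [← h']; norm_num
  have hadd : ∀ a : ZMod n, Equiv.addRight a ∈ dihedral n := by
    intro a
    have := addRight_mem n a.val
    rwa [ZMod.natCast_zmod_val] at this
  have hsub : Equiv.subLeft (2 : ZMod n) ∈ dihedral n :=
    Subgroup.subset_closure (by simp)
  rcases adj 0 with h0 | h0
  · have step : ∀ m : ℕ, ρ ((m : ZMod n) + 1) = ρ m + 1 := by
      intro m
      induction m with
      | zero => simpa using h0
      | succ m ih =>
        push_cast
        rcases adj ((m : ZMod n) + 1) with h | h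
        · exact h
        · exact absurd (by rw [h, ih]; ring) (hne m)
    have lin : ∀ m : ℕ, ρ (m : ZMod n) = m + ρ 0 := by
      intro m
      induction m with
      | zero => simp
      | succ m ih => push_cast; rw [step, ih]; ring
    have : ρ = Equiv.addRight (ρ 0) := by
      ext x
      have := lin x.val
      rw [ZMod.natCast_zmod_val] at this
      simpa using this
    rw [this]; exact hadd _
  · have step : ∀ m : ℕ, ρ ((m : ZMod n) + 1) = ρ m - 1 := by
      intro m
      induction m with
      | zero => simpa using h0
      | succ m ih =>
        push_cast
        rcases adj ((m : ZMod n) + 1) with h | h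
        · exact absurd (by rw [h, ih]; ring) (hne m)
        · exact h
    have lin : ∀ m : ℕ, ρ (m : ZMod n) = ρ 0 - m := by
      intro m
      induction m with
      | zero => simp
      | succ m ih => push_cast; rw [step, ih]; ring
    have : ρ = Equiv.addRight (ρ 0 - 2) * Equiv.subLeft (2 : ZMod n) := by
      apply Equiv.ext
      intro x
      have := lin x.val
      rw [ZMod.natCast_zmod_val] at this
      rw [this]
      simp only [Equiv.Perm.mul_apply, Equiv.coe_addRight, Equiv.subLeft_apply]
      ring
    rw [this]; exact mul_mem (hadd _) hsub
end

section
/- Let n ≥ 4 and 2 ≤ k ≤ n−2 be integers. The checkboard collection C^ch_{k,n} = { I^ch_{i,j} : 0 ≤ i ≤ n−k, 0 ≤ j ≤ k } is a maximal weakly separated collection of k-element subsets of ℤ/nℤ, and it has exactly k(n−k)+1 elements. -/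
open Finset

namespace CB

lemma cast_inj {n : ℕ} {l x y : ℤ} (hx : l < x) (hx' : x ≤ l + n) (hy : l < y) (hy' : y ≤ l + n)
    (h : (x : ZMod n) = (y : ZMod n)) : x = y := by
  rw [ZMod.intCast_eq_intCast_iff_dvd_sub] at h
  have := Int.eq_zero_of_abs_lt_dvd h (by rw [abs_lt]; constructor <;> linarith)
  linarith

lemma exists_rep {n : ℕ} [NeZero n] (l : ℤ) (z : ZMod n) :
    ∃ x : ℤ, l < x ∧ x ≤ l + n ∧ (x : ZMod n) = z := by
  refine ⟨l + 1 + ((z - ((l + 1 : ℤ) : ZMod n)).val : ℤ), by omega, ?_, ?_⟩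
  · have := ZMod.val_lt (z - ((l + 1 : ℤ) : ZMod n))
    omega
  · push_cast
    rw [ZMod.natCast_zmod_val]
    ring

lemma val_sub {n : ℕ} [NeZero n] (a b : ℤ) :
    (((b : ZMod n) - (a : ZMod n)).val : ℤ) = (b - a) % n := by
  rw [← Int.cast_sub, ZMod.val_intCast]

lemma val_sub' {n : ℕ} [NeZero n] {l a b : ℤ} (ha : l < a) (ha' : a ≤ l + n)
    (hb : l < b) (hb' : b ≤ l + n) :
    (((b : ZMod n) - (a : ZMod n)).val : ℤ) = if a ≤ b then b - a else b - a + n := by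
  rw [val_sub]
  split_ifs with h
  · exact Int.emod_eq_of_lt (by omega) (by omega)
  · rw [← Int.add_emod_right]
    exact Int.emod_eq_of_lt (by omega) (by omega)

lemma sco_of_lt {n : ℕ} [NeZero n] {l a b c d : ℤ} (h0 : l < a) (h1 : a < b) (h2 : b < c)
    (h3 : c < d) (h4 : d ≤ l + n) :
    StrictCyclicOrd (a : ZMod n) (b : ZMod n) (c : ZMod n) (d : ZMod n) := by
  have e1 := val_sub' (n := n) (l := l) (a := a) (b := b) (by omega) (by omega) (by omega) (by omega)
  have e2 := val_sub' (n := n) (l := l) (a := a) (b := c) (by omega) (by omega) (by omega) (by omega)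
  have e3 := val_sub' (n := n) (l := l) (a := a) (b := d) (by omega) (by omega) (by omega) (by omega)
  rw [if_pos (by omega)] at e1 e2 e3
  unfold StrictCyclicOrd
  omega

lemma sco_cases {n : ℕ} [NeZero n] {l a b c d : ℤ} (ha : l < a) (ha' : a ≤ l + n)
    (hb : l < b) (hb' : b ≤ l + n) (hc : l < c) (hc' : c ≤ l + n) (hd : l < d) (hd' : d ≤ l + n)
    (h : StrictCyclicOrd (a : ZMod n) (b : ZMod n) (c : ZMod n) (d : ZMod n)) :
    (a < b ∧ b < c ∧ c < d) ∨ (b < c ∧ c < d ∧ d < a) ∨ (c < d ∧ d < a ∧ a < b) ∨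
      (d < a ∧ a < b ∧ b < c) := by
  have e1 := val_sub' ha ha' hb hb'
  have e2 := val_sub' ha ha' hc hc'
  have e3 := val_sub' ha ha' hd hd'
  unfold StrictCyclicOrd at h
  split_ifs at e1 e2 e3 <;> omega

/-- `J` is closed upwards inside `(l, r]`. -/
def Packed {n : ℕ} (J : Finset (ZMod n)) (l r : ℤ) : Prop :=
  ∀ x y : ℤ, l < x → x < y → y ≤ r → (x : ZMod n) ∈ J → (y : ZMod n) ∈ J

lemma Packed.mono {n : ℕ} {J : Finset (ZMod n)} {l r l' r' : ℤ} (h : Packed J l r)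
    (hl : l ≤ l') (hr : r' ≤ r) : Packed J l' r' :=
  fun x y h1 h2 h3 => h x y (by omega) h2 (by omega)

/-- the elements of `J` in a window -/
noncomputable def F {n : ℕ} (J : Finset (ZMod n)) (l r : ℤ) : Finset ℤ :=
  (Finset.Ioc l r).filter (fun x : ℤ => (x : ZMod n) ∈ J)

lemma mem_F {n : ℕ} {J : Finset (ZMod n)} {l r x : ℤ} :
    x ∈ F J l r ↔ (l < x ∧ x ≤ r) ∧ (x : ZMod n) ∈ J := by
  simp [F]

lemma card_F_le {n : ℕ} (J : Finset (ZMod n)) {l r : ℤ} (h : l ≤ r) :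
    ((F J l r).card : ℤ) ≤ r - l := by
  have := Finset.card_filter_le (Finset.Ioc l r) (fun x : ℤ => (x : ZMod n) ∈ J)
  rw [Int.card_Ioc] at this
  unfold F
  omega

lemma card_F {n : ℕ} [NeZero n] (J : Finset (ZMod n)) (l : ℤ) :
    (F J l (l + n)).card = J.card := by
  refine Finset.card_bij (fun x _ => (x : ZMod n)) ?_ ?_ ?_
  · intro x hx; exact (mem_F.1 hx).2
  · intro x hx y hy h
    have hx := (mem_F.1 hx).1
    have hy := (mem_F.1 hy).1
    exact cast_inj hx.1 hx.2 hy.1 hy.2 h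
  · intro z hz
    obtain ⟨x, h1, h2, h3⟩ := exists_rep l z
    exact ⟨x, mem_F.2 ⟨⟨h1, h2⟩, h3 ▸ hz⟩, h3⟩

lemma card_F_add {n : ℕ} [NeZero n] (J : Finset (ZMod n)) {l m : ℤ} (h1 : l ≤ m) (h2 : m ≤ l + n) :
    (F J l m).card + (F J m (l + n)).card = J.card := by
  rw [← card_F J l, ← Finset.card_union_of_disjoint]
  · congr 1
    ext x
    simp only [Finset.mem_union, mem_F]
    constructor
    · rintro (h | h)
      · exact ⟨⟨by omega, by omega⟩, h.2⟩
      · exact ⟨⟨by omega, by omega⟩, h.2⟩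
    · rintro ⟨h, hJ⟩
      by_cases hm : x ≤ m
      · exact Or.inl ⟨⟨h.1, hm⟩, hJ⟩
      · exact Or.inr ⟨⟨by omega, h.2⟩, hJ⟩
  · rw [Finset.disjoint_left]
    intro x hx hy
    have hx := (mem_F.1 hx).1
    have hy := (mem_F.1 hy).1
    omega

lemma ext_F {n : ℕ} [NeZero n] {I J : Finset (ZMod n)} {l m : ℤ}
    (e1 : F I l m = F J l m) (e2 : F I m (l + n) = F J m (l + n)) : I = J := by
  ext z
  obtain ⟨x, h1, h2, rfl⟩ := exists_rep l z
  by_cases hm : x ≤ m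
  · have := Finset.ext_iff.1 e1 x
    simp only [mem_F] at this
    tauto
  · have := Finset.ext_iff.1 e2 x
    simp only [mem_F] at this
    have : m < x := by omega
    tauto

lemma packed_eq {n : ℕ} {I J : Finset (ZMod n)} {l r : ℤ} (hI : Packed I l r) (hJ : Packed J l r)
    (hc : (F I l r).card = (F J l r).card) : F I l r = F J l r := by
  by_cases h : F I l r ⊆ F J l r
  · exact Finset.eq_of_subset_of_card_le h hc.ge
  · symm
    refine Finset.eq_of_subset_of_card_le ?_ hc.le
    obtain ⟨x, hx, hx'⟩ := Finset.not_subset.1 h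
    rw [mem_F] at hx hx'
    intro y hy
    rw [mem_F] at hy ⊢
    refine ⟨hy.1, ?_⟩
    rcases lt_trichotomy x y with h | h | h
    · exact hI x y hx.1.1 h hy.1.2 hx.2
    · exact h ▸ hx.2
    · exact absurd ⟨hx.1, hJ y x hy.1.1 h hx.1.2 hy.2⟩ hx'

/-- same counts, `I` packed, `J` not packed: a `J \ I` element precedes an `I \ J` element -/
lemma not_packed {n : ℕ} {I J : Finset (ZMod n)} {l r : ℤ} (hI : Packed I l r)
    (hJ : ¬ Packed J l r) (hc : (F I l r).card = (F J l r).card) :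
    ∃ u v : ℤ, l < u ∧ u < v ∧ v ≤ r ∧ (u : ZMod n) ∈ J \ I ∧ (v : ZMod n) ∈ I \ J := by
  have hne : F I l r ≠ F J l r := by
    intro e
    apply hJ
    intro x y h1 h2 h3 h4
    have hx : x ∈ F I l r := by rw [e, mem_F]; exact ⟨⟨h1, by omega⟩, h4⟩
    have hy : y ∈ F I l r := mem_F.2 ⟨⟨by omega, h3⟩, hI x y h1 h2 h3 (mem_F.1 hx).2⟩
    rw [e] at hy
    exact (mem_F.1 hy).2
  have n1 : ¬ F I l r ⊆ F J l r := fun h => hne (Finset.eq_of_subset_of_card_le h hc.ge)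
  have n2 : ¬ F J l r ⊆ F I l r := fun h => hne (Finset.eq_of_subset_of_card_le h hc.le).symm
  obtain ⟨v, hv, hv'⟩ := Finset.not_subset.1 n1
  obtain ⟨u, hu, hu'⟩ := Finset.not_subset.1 n2
  rw [mem_F] at hu hu' hv hv'
  have huI : (u : ZMod n) ∉ I := fun h => hu' ⟨hu.1, h⟩
  have hvJ : (v : ZMod n) ∉ J := fun h => hv' ⟨hv.1, h⟩
  refine ⟨u, v, hu.1.1, ?_, hv.1.2, Finset.mem_sdiff.2 ⟨hu.2, huI⟩, Finset.mem_sdiff.2 ⟨hv.2, hvJ⟩⟩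
  rcases lt_trichotomy u v with h | h | h
  · exact h
  · exact absurd hv.2 (h ▸ huI)
  · exact absurd (hI v u hv.1.1 h hu.1.2 hv.2) huI

lemma ws_of_packed {n : ℕ} [NeZero n] {I J : Finset (ZMod n)} {l m : ℤ}
    (hI : Packed I m (l + n)) (hJ : Packed J l m) : WeaklySep I J ∧ WeaklySep J I := by
  have key : ∀ u v : ℤ, l < u → u ≤ l + n → l < v → v ≤ l + n → (u : ZMod n) ∈ I \ J →
      (v : ZMod n) ∈ J \ I → (u ≤ m → v ≤ m → u < v) ∧ (m < u → m < v → v < u) := by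
    intro u v h1 h2 h3 h4 hu hv
    rw [Finset.mem_sdiff] at hu hv
    have hne : u ≠ v := fun h => hv.2 (h ▸ hu.1)
    constructor
    · intro a b
      by_contra hlt
      exact hu.2 (hJ v u h3 (by omega) a hv.1)
    · intro a b
      by_contra hlt
      exact hv.2 (hI u v a (by omega) h4 hu.1)
  constructor
  · rintro ⟨a, c, b, d, ha, hc, hb, hd, h⟩
    obtain ⟨a, a1, a2, rfl⟩ := exists_rep l a
    obtain ⟨b, b1, b2, rfl⟩ := exists_rep l b
    obtain ⟨c, c1, c2, rfl⟩ := exists_rep l c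
    obtain ⟨d, d1, d2, rfl⟩ := exists_rep l d
    have := sco_cases a1 a2 b1 b2 c1 c2 d1 d2 h
    have k1 := key a b a1 a2 b1 b2 ha hb
    have k2 := key a d a1 a2 d1 d2 ha hd
    have k3 := key c b c1 c2 b1 b2 hc hb
    have k4 := key c d c1 c2 d1 d2 hc hd
    omega
  · rintro ⟨a, c, b, d, ha, hc, hb, hd, h⟩
    obtain ⟨a, a1, a2, rfl⟩ := exists_rep l a
    obtain ⟨b, b1, b2, rfl⟩ := exists_rep l b
    obtain ⟨c, c1, c2, rfl⟩ := exists_rep l c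
    obtain ⟨d, d1, d2, rfl⟩ := exists_rep l d
    have := sco_cases a1 a2 b1 b2 c1 c2 d1 d2 h
    have k1 := key b a b1 b2 a1 a2 hb ha
    have k2 := key d a d1 d2 a1 a2 hd ha
    have k3 := key b c b1 b2 c1 c2 hb hc
    have k4 := key d c d1 d2 c1 c2 hd hc
    omega

/-- shift at level `s` -/
def sh (s : ℕ) : ℤ := (((s + 1) / 2 : ℕ) : ℤ)

lemma sh_bd (s : ℕ) : 2 * sh s = s ∨ 2 * sh s = s + 1 := by
  unfold sh; omega

def S1 {n : ℕ} (J : Finset (ZMod n)) (s : ℕ) : Prop := Packed J (-sh s) (s - sh s)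
def S2 {n : ℕ} (J : Finset (ZMod n)) (s : ℕ) : Prop := Packed J (s - sh s) (-sh s + n)

lemma mem_seg {n m : ℕ} (hm : m ≤ n) {x : ℤ} (h1 : 1 ≤ x) (h2 : x ≤ n) :
    (x : ZMod n) ∈ seg n m ↔ x ≤ m := by
  unfold seg
  rw [Finset.mem_image]
  constructor
  · rintro ⟨t, ht, e⟩
    rw [Finset.mem_Icc] at ht
    have : (t : ℤ) = x := by
      apply cast_inj (n := n) (l := 0) <;> first | omega | (push_cast; exact e)
    omega
  · intro h
    refine ⟨x.toNat, ?_, ?_⟩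
    · rw [Finset.mem_Icc]; omega
    · rw [← Int.cast_natCast, Int.toNat_of_nonneg (by omega)]

lemma mem_Ich {n k i j : ℕ} (hk : k ≤ n) (hi : i ≤ n - k) (hj : j ≤ k) {x : ℤ}
    (h1 : - sh (i + j) < x) (h2 : x ≤ - sh (i + j) + n) :
    (x : ZMod n) ∈ Ich k n i j ↔
      (i - sh (i + j) < x ∧ x ≤ i + j - sh (i + j)) ∨ (n - k + j - sh (i + j) < x) := by
  have e : (x : ZMod n) ∈ Ich k n i j ↔ ((x + sh (i + j) : ℤ) : ZMod n) ∈ Irec k n i j := by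
    unfold Ich sh
    rw [Finset.mem_image]
    constructor
    · rintro ⟨y, hy, e⟩
      convert hy using 1
      rw [Int.cast_add, Int.cast_natCast, ← e]
      exact sub_add_cancel _ _
    · intro h
      exact ⟨_, h, by rw [Int.cast_add, Int.cast_natCast]; exact add_sub_cancel_right _ _⟩
  rw [e]
  unfold Irec
  have b1 : 1 ≤ x + sh (i + j) := by omega
  have b2 : x + sh (i + j) ≤ n := by omega
  simp only [Finset.mem_union, Finset.mem_sdiff]
  rw [mem_seg (by omega) b1 b2, mem_seg (by omega) b1 b2, mem_seg (by omega) b1 b2,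
    mem_seg (by omega) b1 b2]
  omega

section
variable {n k i j : ℕ} 

lemma F1_Ich (hk : k ≤ n) (hi : i ≤ n - k) (hj : j ≤ k) :
    F (Ich k n i j) (-sh (i + j)) ((i + j : ℕ) - sh (i + j)) =
      Finset.Ioc (i - sh (i + j)) (i + j - sh (i + j)) := by
  ext x
  rw [mem_F, Finset.mem_Ioc]
  constructor
  · rintro ⟨h, h'⟩
    rw [mem_Ich hk hi hj (by omega) (by omega)] at h'
    omega
  · intro h
    refine ⟨by omega, ?_⟩
    rw [mem_Ich hk hi hj (by omega) (by omega)]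
    omega

lemma F2_Ich (hk : k ≤ n) (hi : i ≤ n - k) (hj : j ≤ k) :
    F (Ich k n i j) ((i + j : ℕ) - sh (i + j)) (-sh (i + j) + n) =
      Finset.Ioc (n - k + j - sh (i + j)) (-sh (i + j) + n) := by
  ext x
  rw [mem_F, Finset.mem_Ioc]
  constructor
  · rintro ⟨h, h'⟩
    rw [mem_Ich hk hi hj (by omega) (by omega)] at h'
    omega
  · intro h
    refine ⟨by omega, ?_⟩
    rw [mem_Ich hk hi hj (by omega) (by omega)]
    omega

lemma cF1 (hk : k ≤ n) (hi : i ≤ n - k) (hj : j ≤ k) :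
    (F (Ich k n i j) (-sh (i + j)) ((i + j : ℕ) - sh (i + j))).card = j := by
  rw [F1_Ich hk hi hj, Int.card_Ioc]; omega

lemma cF2 (hk : k ≤ n) (hi : i ≤ n - k) (hj : j ≤ k) :
    (F (Ich k n i j) ((i + j : ℕ) - sh (i + j)) (-sh (i + j) + n)).card = k - j := by
  rw [F2_Ich hk hi hj, Int.card_Ioc]; omega

lemma card_Ich [NeZero n] (hk : k ≤ n) (hi : i ≤ n - k) (hj : j ≤ k) : (Ich k n i j).card = k := by
  have := card_F_add (Ich k n i j) (l := -sh (i + j)) (m := (i + j : ℕ) - sh (i + j))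
    (by omega) (by omega)
  rw [cF1 hk hi hj, cF2 hk hi hj] at this
  omega

lemma S1_Ich (hk : k ≤ n) (hi : i ≤ n - k) (hj : j ≤ k) {t : ℕ} (ht : t ≤ i + j) :
    S1 (Ich k n i j) t := by
  have : S1 (Ich k n i j) (i + j) := by
    intro x y h1 h2 h3 h
    rw [mem_Ich hk hi hj (by omega) (by omega)] at h ⊢
    omega
  have a := sh_bd t
  have b := sh_bd (i + j)
  exact Packed.mono this (by omega) (by omega)

lemma S2_Ich (hk : k ≤ n) (hi : i ≤ n - k) (hj : j ≤ k) {t : ℕ} (ht : i + j ≤ t) :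
    S2 (Ich k n i j) t := by
  have a := sh_bd t
  have b := sh_bd (i + j)
  have : S2 (Ich k n i j) (i + j) := by
    intro x y h1 h2 h3 h
    rw [mem_Ich hk hi hj (by omega) (by omega)] at h ⊢
    omega
  exact Packed.mono this (by omega) (by omega)

lemma step {J : Finset (ZMod n)} {s : ℕ} (hs : s < n) (h1 : S1 J s) (h2 : S2 J (s + 1)) :
    S1 J (s + 1) ∨ S2 J s := by
  unfold S1 S2 at *
  rcases Nat.even_or_odd s with ⟨r, hr⟩ | ⟨r, hr⟩
  · have e1 : sh s = r := by unfold sh; omega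
    have e2 : sh (s + 1) = r + 1 := by unfold sh; omega
    by_cases hx : ((-r : ℤ) : ZMod n) ∈ J
    · right
      intro x y a b c d
      by_cases hy : y = -r + n
      · have : (y : ZMod n) = ((-r : ℤ) : ZMod n) := by rw [hy]; push_cast; simp
        rwa [this]
      · exact h2 x y (by push_cast; omega) b (by omega) d
    · left
      intro x y a b c d
      by_cases hxx : x = -r
      · rw [hxx] at d; exact absurd d hx
      · exact h1 x y (by omega) b (by push_cast at c; omega) d
  · have e1 : sh s = r + 1 := by unfold sh; omega
    have e2 : sh (s + 1) = r + 1 := by unfold sh; omega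
    by_cases hx : ((s - r : ℤ) : ZMod n) ∈ J
    · left
      intro x y a b c d
      by_cases hy : y = s - r
      · rwa [hy]
      · exact h1 x y (by omega) b (by push_cast at c; omega) d
    · right
      intro x y a b c d
      by_cases hxx : x = s - r
      · rw [hxx] at d; exact absurd d hx
      · exact h2 x y (by push_cast; omega) b (by omega) d

/-- counts of a `k`-set on the two sides of the level-`s` chord give a legal cell -/
lemma counts [NeZero n] {J : Finset (ZMod n)} (hk : k ≤ n) (hJ : J.card = k) {s : ℕ} (hs : s ≤ n) :
    ∃ i j : ℕ, i ≤ n - k ∧ j ≤ k ∧ i + j = s ∧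
      (F (Ich k n i j) (-sh s) (s - sh s)).card = (F J (-sh s) (s - sh s)).card ∧
      (F (Ich k n i j) (s - sh s) (-sh s + n)).card = (F J (s - sh s) (-sh s + n)).card := by
  have a := card_F_add J (l := -sh s) (m := s - sh s) (by omega) (by omega)
  have b := card_F_le J (l := -sh s) (r := s - sh s) (by omega)
  have c := card_F_le J (l := s - sh s) (r := -sh s + n) (by omega)
  have hj : (F J (-sh s) (s - sh s)).card ≤ k := by omega
  have hi : s - (F J (-sh s) (s - sh s)).card ≤ n - k := by omega
  have e : s - (F J (-sh s) (s - sh s)).card + (F J (-sh s) (s - sh s)).card = s := by omega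
  refine ⟨_, _, hi, hj, e, ?_, ?_⟩
  · have := cF1 hk hi hj
    rwa [e] at this
  · have := cF2 hk hi hj
    rw [e] at this
    omega

lemma eq_of_packed [NeZero n] {J : Finset (ZMod n)} (hk : k ≤ n) (hJ : J.card = k) {s : ℕ}
    (hs : s ≤ n) (h1 : S1 J s) (h2 : S2 J s) :
    ∃ i j : ℕ, i ≤ n - k ∧ j ≤ k ∧ i + j = s ∧ J = Ich k n i j := by
  obtain ⟨i, j, hi, hj, rfl, c1, c2⟩ := counts hk hJ hs
  refine ⟨i, j, hi, hj, rfl, ?_⟩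
  symm
  exact ext_F (packed_eq (S1_Ich hk hi hj le_rfl) h1 c1) (packed_eq (S2_Ich hk hi hj le_rfl) h2 c2)

lemma packed_or [NeZero n] {J : Finset (ZMod n)} (hk : k ≤ n) (hJ : J.card = k)
    (hws : ∀ i j, i ≤ n - k → j ≤ k → WeaklySep J (Ich k n i j)) {s : ℕ}
    (hs : s ≤ n) : S1 J s ∨ S2 J s := by
  by_contra! hcon
  obtain ⟨i, j, hi, hj, rfl, c1, c2⟩ := counts hk hJ hs
  obtain ⟨a, b, a1, a2, a3, a4, a5⟩ := not_packed (S1_Ich hk hi hj le_rfl) hcon.1 c1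
  obtain ⟨c, d, b1, b2, b3, b4, b5⟩ := not_packed (S2_Ich hk hi hj le_rfl) hcon.2 c2
  exact hws i j hi hj ⟨a, c, b, d, a4, b4, a5, b5, sco_of_lt a1 a2 (by omega) b2 b3⟩

lemma maximal [NeZero n] {J : Finset (ZMod n)} (hk : k ≤ n) (hJ : J.card = k)
    (hws : ∀ i j, i ≤ n - k → j ≤ k → WeaklySep J (Ich k n i j)) :
    ∃ i j : ℕ, i ≤ n - k ∧ j ≤ k ∧ J = Ich k n i j := by
  by_contra hcon
  have no : ∀ s ≤ n, ¬ (S1 J s ∧ S2 J s) := by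
    rintro s hs ⟨h1, h2⟩
    obtain ⟨i, j, hi, hj, _, e⟩ := eq_of_packed hk hJ hs h1 h2
    exact hcon ⟨i, j, hi, hj, e⟩
  have all : ∀ s ≤ n, S1 J s := by
    intro s
    induction s with
    | zero =>
      intro _ x y h1 h2 h3
      simp only [Nat.cast_zero] at h3
      omega
    | succ s ih =>
      intro hs
      have h := ih (by omega)
      rcases packed_or hk hJ hws hs with h' | h'
      · exact h'
      · rcases step (by omega) h h' with h'' | h''
        · exact h''
        · exact absurd ⟨h, h''⟩ (no s (by omega))
  refine no n le_rfl ⟨all n le_rfl, ?_⟩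
  intro x y h1 h2 h3
  omega

/-- the cell of level `t+1` whose label already occurs at level `t` -/
def bc (k n t : ℕ) : ℕ × ℕ :=
  if t % 2 = 0 then (if t + 1 ≤ k then (0, t + 1) else (t + 1 - k, k))
  else (if t + 1 ≤ n - k then (t + 1, 0) else (n - k, t + 1 - (n - k)))

lemma bc_spec {t : ℕ} (hk : k ≤ n) (ht : t < n) :
    (bc k n t).1 ≤ n - k ∧ (bc k n t).2 ≤ k ∧ (bc k n t).1 + (bc k n t).2 = t + 1 := by
  unfold bc
  split_ifs <;> dsimp only <;> omega

lemma bc_S2 {t : ℕ} (hk : k ≤ n) (ht : t < n) : S2 (Ich k n (bc k n t).1 (bc k n t).2) t := by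
  obtain ⟨hi, hj, hs⟩ := bc_spec hk ht
  have hd : (t % 2 = 0 ∧ ((bc k n t).1 = 0 ∨ (bc k n t).2 = k)) ∨
      (t % 2 = 1 ∧ ((bc k n t).2 = 0 ∨ (bc k n t).1 = n - k)) := by
    unfold bc
    split_ifs <;> dsimp only <;> omega
  generalize (bc k n t).1 = i at *
  generalize (bc k n t).2 = j at *
  have e0 : sh (i + j) = sh (t + 1) := by rw [hs]
  have e1 : sh t = (t + t % 2 : ℕ) / 2 := by unfold sh; omega
  have e2 : sh (t + 1) = (t + 2 - t % 2 : ℕ) / 2 := by unfold sh; omega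
  intro x y h1 h2 h3 h
  rw [mem_Ich hk hi hj (by omega) (by omega)] at h
  by_cases hy : y ≤ -sh (i + j) + n
  · rw [mem_Ich hk hi hj (by omega) (by omega)]
    omega
  · have : (y : ZMod n) = ((y - n : ℤ) : ZMod n) := by push_cast; simp
    rw [this, mem_Ich hk hi hj (by omega) (by omega)]
    omega

lemma bc_of_S2 {t : ℕ} (hk : k ≤ n) (hk0 : 0 < k) (hkn : k < n) (ht : t < n)
    (hi : i ≤ n - k) (hj : j ≤ k) (hs : i + j = t + 1)
    (h : S2 (Ich k n i j) t) : (i, j) = bc k n t := by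
  have e0 : sh (i + j) = sh (t + 1) := by rw [hs]
  have e1 : sh t = (t + t % 2 : ℕ) / 2 := by unfold sh; omega
  have e2 : sh (t + 1) = (t + 2 - t % 2 : ℕ) / 2 := by unfold sh; omega
  have hd : (t % 2 = 0 ∧ (i = 0 ∨ j = k)) ∨ (t % 2 = 1 ∧ (j = 0 ∨ i = n - k)) := by
    by_contra hcon
    rcases Nat.mod_two_eq_zero_or_one t with hp | hp
    · have := h (-sh t + n - 1) (-sh t + n) (by omega) (by omega) (by omega)
        (by rw [mem_Ich hk hi hj (by omega) (by omega)]; omega)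
      have e : ((-sh t + n : ℤ) : ZMod n) = ((-sh t : ℤ) : ZMod n) := by push_cast; simp
      rw [e, mem_Ich hk hi hj (by omega) (by omega)] at this
      omega
    · have := h (t + 1 - sh t) (t + 2 - sh t) (by omega) (by omega) (by omega)
        (by rw [mem_Ich hk hi hj (by omega) (by omega)]; omega)
      rw [mem_Ich hk hi hj (by omega) (by omega)] at this
      omega
  unfold bc
  split_ifs <;> ext <;> dsimp only <;> omega

lemma card_C (hk : k ≤ n) (hk0 : 0 < k) (hkn : k < n) :
    (Cch k n).card = k * (n - k) + 1 := by
  haveI : NeZero n := ⟨by omega⟩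
  set G := (Finset.range (n - k + 1)) ×ˢ (Finset.range (k + 1)) with hG
  set B := (Finset.range n).image (bc k n) with hB
  have memG : ∀ p : ℕ × ℕ, p ∈ G ↔ p.1 ≤ n - k ∧ p.2 ≤ k := by
    intro p
    rw [hG, Finset.mem_product, Finset.mem_range, Finset.mem_range]; omega
  have hBG : B ⊆ G := by
    intro p hp
    obtain ⟨t, ht, rfl⟩ := Finset.mem_image.1 hp
    have := bc_spec hk (Finset.mem_range.1 ht)
    exact (memG _).2 ⟨this.1, this.2.1⟩
  have cB : B.card = n := by
    rw [hB, Finset.card_image_of_injOn, Finset.card_range]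
    intro s hs t ht e
    have a := bc_spec hk (Finset.mem_range.1 (Finset.mem_coe.1 hs))
    have b := bc_spec hk (Finset.mem_range.1 (Finset.mem_coe.1 ht))
    rw [e] at a
    omega
  have cG : G.card = (n - k + 1) * (k + 1) := by
    rw [hG, Finset.card_product, Finset.card_range, Finset.card_range]
  -- no label at two levels outside B
  have key : ∀ p ∈ G, ∀ q ∈ G, Ich k n p.1 p.2 = Ich k n q.1 q.2 → p.1 + p.2 < q.1 + q.2 →
      q ∈ B := by
    rintro ⟨i, j⟩ hp ⟨i', j'⟩ hq e hlt
    rw [memG] at hp hq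
    dsimp only at *
    obtain ⟨t, ht⟩ : ∃ t, i' + j' = t + 1 := ⟨i' + j' - 1, by omega⟩
    rw [hB, Finset.mem_image]
    refine ⟨t, Finset.mem_range.2 (by omega), ?_⟩
    symm
    refine bc_of_S2 hk hk0 hkn (by omega) hq.1 hq.2 ht ?_
    rw [← e]
    exact S2_Ich hk hp.1 hp.2 (by omega)
  have himg : Cch k n = (G \ B).image (fun p => Ich k n p.1 p.2) := by
    apply Finset.Subset.antisymm
    · intro J hJ
      obtain ⟨p, hp, rfl⟩ := Finset.mem_image.1 hJ
      clear hJ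
      suffices H : ∀ s, ∀ p ∈ G, p.1 + p.2 = s →
          Ich k n p.1 p.2 ∈ (G \ B).image (fun p => Ich k n p.1 p.2) from H _ p hp rfl
      intro s
      induction s with
      | zero =>
        intro p hp hs
        refine Finset.mem_image.2 ⟨p, Finset.mem_sdiff.2 ⟨hp, ?_⟩, rfl⟩
        intro h
        obtain ⟨t, ht, rfl⟩ := Finset.mem_image.1 h
        have := bc_spec hk (Finset.mem_range.1 ht)
        omega
      | succ s ih =>
        intro p hp hs
        by_cases h : p ∈ B
        · obtain ⟨t, ht, rfl⟩ := Finset.mem_image.1 h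
          have sp := bc_spec hk (Finset.mem_range.1 ht)
          obtain rfl : t = s := by omega
          have htn := Finset.mem_range.1 ht
          obtain ⟨i, j, hi, hj, hij, e⟩ := eq_of_packed hk (card_Ich hk sp.1 sp.2.1) htn.le
            (S1_Ich hk sp.1 sp.2.1 (by omega)) (bc_S2 hk htn)
          rw [e]
          exact ih (i, j) ((memG _).2 ⟨hi, hj⟩) hij
        · exact Finset.mem_image.2 ⟨p, Finset.mem_sdiff.2 ⟨hp, h⟩, rfl⟩
    · exact Finset.image_subset_image Finset.sdiff_subset
  rw [himg, Finset.card_image_of_injOn, Finset.card_sdiff_of_subset hBG, cB, cG]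
  · obtain ⟨m, rfl⟩ := Nat.exists_eq_add_of_le hk
    rw [Nat.add_sub_cancel_left]
    have : (m + 1) * (k + 1) = k * m + 1 + (k + m) := by ring
    omega
  · intro p hp q hq e
    have hp := Finset.mem_sdiff.1 (Finset.mem_coe.1 hp)
    have hq := Finset.mem_sdiff.1 (Finset.mem_coe.1 hq)
    dsimp only at e
    rcases lt_trichotomy (p.1 + p.2) (q.1 + q.2) with h | h | h
    · exact absurd (key p hp.1 q hq.1 e h) hq.2
    · have a := (memG _).1 hp.1
      have b := (memG _).1 hq.1
      have c1 := cF1 hk a.1 a.2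
      have c2 := cF1 hk b.1 b.2
      rw [e, h] at c1
      ext <;> omega
    · exact absurd (key q hq.1 p hp.1 e.symm h) hp.2

end

end CB

/-- the checkboard collection is a maximal weakly separated collection of
`k`-subsets of `ℤ/nℤ` with exactly `k(n−k)+1` elements. -/
theorem checkboard_isMaxWSColl_card
    (n k : ℕ) (hn : 4 ≤ n) (hk : 2 ≤ k) (hkn : k ≤ n - 2) :
    IsMaxWSColl n k (↑(Cch k n) : Set (Finset (ZMod n))) ∧
      (Cch k n).card = k * (n - k) + 1 := by
  haveI : NeZero n := ⟨by omega⟩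
  have hkn' : k ≤ n := by omega
  have memC : ∀ J, J ∈ (↑(Cch k n) : Set (Finset (ZMod n))) ↔
      ∃ i j : ℕ, i ≤ n - k ∧ j ≤ k ∧ J = Ich k n i j := by
    intro J
    rw [Finset.mem_coe, Cch, Finset.mem_image]
    constructor
    · rintro ⟨⟨i, j⟩, h, rfl⟩
      rw [Finset.mem_product, Finset.mem_range, Finset.mem_range] at h
      exact ⟨i, j, by omega, by omega, rfl⟩
    · rintro ⟨i, j, hi, hj, rfl⟩
      refine ⟨(i, j), ?_, rfl⟩
      rw [Finset.mem_product, Finset.mem_range, Finset.mem_range]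
      omega
  refine ⟨⟨⟨?_, ?_⟩, ?_⟩, CB.card_C hkn' (by omega) (by omega)⟩
  · intro I hI
    obtain ⟨i, j, hi, hj, rfl⟩ := (memC I).1 hI
    exact CB.card_Ich hkn' hi hj
  · intro I hI J hJ
    obtain ⟨i, j, hi, hj, rfl⟩ := (memC I).1 hI
    obtain ⟨i', j', hi', hj', rfl⟩ := (memC J).1 hJ
    rcases le_total (i + j) (i' + j') with h | h
    · exact (CB.ws_of_packed (CB.S2_Ich hkn' hi hj le_rfl) (CB.S1_Ich hkn' hi' hj' h)).1
    · exact (CB.ws_of_packed (CB.S2_Ich hkn' hi' hj' le_rfl) (CB.S1_Ich hkn' hi hj h)).2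
  · intro C' hC' hsub
    apply Set.Subset.antisymm _ hsub
    intro J hJ
    rw [memC]
    refine CB.maximal hkn' (hC'.1 J hJ) ?_
    intro i j hi hj
    exact hC'.2 J hJ _ (hsub ((memC _).2 ⟨i, j, hi, hj, rfl⟩))
end

section
/- Let n ≥ 4 and 2 ≤ k ≤ n−2 be integers. If k is even, then σ^{k/2}·C^ch_{k,n} = Ĉ^ch_{k,n}, and more precisely σ^{k/2}(I^ch_{i,j}) = Î^ch_{k−j, i} for all 0 ≤ i ≤ n−k and 0 ≤ j ≤ k. If n−k is even, then σ^{−(n−k)/2}·C^ch_{k,n} = Ĉ^ch_{k,n}, and more precisely σ^{−(n−k)/2}(I^ch_{i,j}) = Î^ch_{j, n−k−i} for all 0 ≤ i ≤ n−k and 0 ≤ j ≤ k. -/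
open Finset

/-- The translated arc `(a, b] + c`. -/
def arcA (n a b : ℕ) (c : ZMod n) : Finset (ZMod n) :=
  (Finset.Ioc a b).image (fun t : ℕ => (t : ZMod n) + c)

theorem seg_sdiff_arcA (n a b : ℕ) (hb : b ≤ n) :
    seg n b \ seg n a = arcA n a b 0 := by
  ext x
  simp only [seg, arcA, Finset.mem_sdiff, Finset.mem_image, Finset.mem_Icc, Finset.mem_Ioc, add_zero]
  constructor
  · rintro ⟨⟨t, ht, rfl⟩, h⟩
    refine ⟨t, ⟨?_, ht.2⟩, rfl⟩
    by_contra hc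
    exact h ⟨t, ⟨ht.1, by omega⟩, rfl⟩
  · rintro ⟨t, ht, rfl⟩
    refine ⟨⟨t, ⟨by omega, ht.2⟩, rfl⟩, ?_⟩
    rintro ⟨u, hu, he⟩
    rw [ZMod.natCast_eq_natCast_iff'] at he
    rcases Nat.lt_or_ge t n with h | h
    · rw [Nat.mod_eq_of_lt h, Nat.mod_eq_of_lt (by omega)] at he
      omega
    · have : t = n := by omega
      subst this
      rw [Nat.mod_self, Nat.mod_eq_of_lt (by omega)] at he
      omega

theorem seg_arcA (n b : ℕ) : seg n b = arcA n 0 b 0 := by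
  ext x
  simp only [seg, arcA, Finset.mem_image, Finset.mem_Icc, Finset.mem_Ioc, add_zero]
  rfl

theorem arcA_image (n a b : ℕ) (c d : ZMod n) :
    (arcA n a b c).image (fun x => x + d) = arcA n a b (c + d) := by
  simp only [arcA, Finset.image_image]
  congr 1
  ext t
  simp [add_assoc]

theorem arcA_shift (n a b a' b' m : ℕ) (c c' : ZMod n) (ha : a' = a + m) (hb : b' = b + m)
    (hc : c = c' + m) : arcA n a b c = arcA n a' b' c' := by
  subst ha hb hc
  ext x
  simp only [arcA, Finset.mem_image, Finset.mem_Ioc]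
  constructor
  · rintro ⟨t, ht, rfl⟩
    exact ⟨t + m, by omega, by push_cast; ring⟩
  · rintro ⟨t, ht, rfl⟩
    obtain ⟨u, rfl⟩ : ∃ u, t = u + m := ⟨t - m, by omega⟩
    exact ⟨u, by omega, by push_cast; ring⟩

theorem Ich_arc (n k i j : ℕ) (hkn : k ≤ n) (hi : i ≤ n - k) (hj : j ≤ k) (d : ZMod n) :
    (Ich k n i j).image (fun x => x + d) =
      arcA n i (i + j) (d - ((i + j + 1) / 2 : ℕ)) ∪
      arcA n (n - k + j) n (d - ((i + j + 1) / 2 : ℕ)) := by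
  simp only [Ich, Irec, sub_eq_add_neg (_ : ZMod n)]
  rw [seg_sdiff_arcA n i (i + j) (by omega), seg_sdiff_arcA n _ n le_rfl]
  simp only [Finset.image_union, arcA_image, zero_add]
  rw [add_comm d]

theorem Dch_arc (n k i j : ℕ) (hkn : k ≤ n) (hi : i ≤ k) (hj : j ≤ n - k) :
    Dch k n i j =
      arcA n 0 i (- ((i + j + 1) / 2 : ℕ)) ∪
      arcA n (i + j) (k + j) (- ((i + j + 1) / 2 : ℕ)) := by
  simp only [Dch, Drec, sub_eq_add_neg (_ : ZMod n)]
  rw [seg_sdiff_arcA n (i + j) (k + j) (by omega), seg_arcA]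
  simp only [Finset.image_union, arcA_image, zero_add]

theorem label_one (n k i j : ℕ) (hkn : k ≤ n) (hi : i ≤ n - k) (hj : j ≤ k) (he : k % 2 = 0) :
    (Ich k n i j).image (fun x => x + ((k / 2 : ℕ) : ZMod n)) = Dch k n (k - j) i := by
  rw [Ich_arc n k i j hkn hi hj, Dch_arc n k (k - j) i hkn (by omega) hi, Finset.union_comm]
  have key : (((k / 2 : ℕ) : ZMod n) - ((i + j + 1) / 2 : ℕ)) =
      - ((k - j + i + 1) / 2 : ℕ) + ((k - j : ℕ) : ZMod n) := by
    have : k / 2 + (k - j + i + 1) / 2 = (k - j) + (i + j + 1) / 2 := by omega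
    have h2 := congrArg (Nat.cast : ℕ → ZMod n) this
    rw [Nat.cast_add, Nat.cast_add] at h2
    linear_combination h2
  congr 1
  · rw [arcA_shift n (n - k + j) n n (n + (k - j)) (k - j) _ _ (by omega) rfl key]
    exact (arcA_shift n 0 (k - j) n (n + (k - j)) n _ _ (by omega) (by omega) (by simp)).symm
  · exact arcA_shift n _ _ _ _ (k - j) _ _ (by omega) (by omega) key

theorem label_two (n k i j : ℕ) (hkn : k ≤ n) (hi : i ≤ n - k) (hj : j ≤ k)
    (he : (n - k) % 2 = 0) :
    (Ich k n i j).image (fun x => x - (((n - k) / 2 : ℕ) : ZMod n)) = Dch k n j (n - k - i) := by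
  have h0 := Ich_arc n k i j hkn hi hj (-(((n - k) / 2 : ℕ) : ZMod n))
  simp only [← sub_eq_add_neg] at h0
  rw [h0, Dch_arc n k j (n - k - i) hkn hj (by omega)]
  have key : - ((j + (n - k - i) + 1) / 2 : ℕ) =
      (-(((n - k) / 2 : ℕ) : ZMod n) - ((i + j + 1) / 2 : ℕ)) + (i : ZMod n) := by
    have : (n - k) / 2 + (i + j + 1) / 2 = i + (j + (n - k - i) + 1) / 2 := by omega
    have h2 := congrArg (Nat.cast : ℕ → ZMod n) this
    rw [Nat.cast_add, Nat.cast_add] at h2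
    linear_combination h2
  congr 1
  · exact (arcA_shift n _ _ _ _ i _ _ (by omega) (by omega) key).symm
  · exact (arcA_shift n _ _ _ _ i _ _ (by omega) (by omega) key).symm

/-- if `k` is even then `σ^{k/2}` takes the checkboard collection to the
dual checkboard collection (labelwise `σ^{k/2}(I^ch_{i,j}) = Î^ch_{k−j,i}`), and if
`n−k` is even then `σ^{−(n−k)/2}` does (labelwise `σ^{−(n−k)/2}(I^ch_{i,j}) = Î^ch_{j,n−k−i}`). -/
theorem rotate_checkboard_eq_dual
    (n k : ℕ) (hn : 4 ≤ n) (hk : 2 ≤ k) (hkn : k ≤ n - 2) :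
    (k % 2 = 0 →
      (∀ i j : ℕ, i ≤ n - k → j ≤ k →
        (Ich k n i j).image (fun x => x + ((k / 2 : ℕ) : ZMod n)) = Dch k n (k - j) i) ∧
      (Cch k n).image (fun I => I.image (fun x => x + ((k / 2 : ℕ) : ZMod n))) = CDch k n) ∧
    ((n - k) % 2 = 0 →
      (∀ i j : ℕ, i ≤ n - k → j ≤ k →
        (Ich k n i j).image (fun x => x - (((n - k) / 2 : ℕ) : ZMod n)) = Dch k n j (n - k - i)) ∧
      (Cch k n).image (fun I => I.image (fun x => x - (((n - k) / 2 : ℕ) : ZMod n))) = CDch k n) := by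
  have hkn' : k ≤ n := by omega
  refine ⟨fun he => ?_, fun he => ?_⟩
  · have L := fun i j hi hj => label_one n k i j hkn' hi hj he
    refine ⟨L, ?_⟩
    ext S
    simp only [Cch, CDch, Finset.mem_image, Finset.mem_product, Finset.mem_range, Prod.exists]
    constructor
    · rintro ⟨_, ⟨i, j, h, rfl⟩, rfl⟩
      exact ⟨k - j, i, by omega, (L i j (by omega) (by omega)).symm⟩
    · rintro ⟨a, b, h, rfl⟩
      refine ⟨_, ⟨b, k - a, by omega, rfl⟩, ?_⟩
      rw [L b (k - a) (by omega) (by omega), Nat.sub_sub_self (by omega)]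
  · have L := fun i j hi hj => label_two n k i j hkn' hi hj he
    refine ⟨L, ?_⟩
    ext S
    simp only [Cch, CDch, Finset.mem_image, Finset.mem_product, Finset.mem_range, Prod.exists]
    constructor
    · rintro ⟨_, ⟨i, j, h, rfl⟩, rfl⟩
      exact ⟨j, n - k - i, by omega, (L i j (by omega) (by omega)).symm⟩
    · rintro ⟨a, b, h, rfl⟩
      refine ⟨_, ⟨n - k - b, a, by omega, rfl⟩, ?_⟩
      rw [L (n - k - b) a (by omega) (by omega), Nat.sub_sub_self (by omega)]
end

section
/- Let n ≥ 5 and 2 ≤ k ≤ n−2 be integers such that both k and n−k are odd. Then the dual checkboard collection Ĉ^ch_{k,n} does not lie in the D_n-orbit of the checkboard collection C^ch_{k,n}: there is no ρ ∈ D_n with ρ·C^ch_{k,n} = Ĉ^ch_{k,n}. -/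
open Finset

theorem rep_aux (n : ℕ) (hn : 5 ≤ n) (x : ZMod n) : ∃ t : ℕ, 1 ≤ t ∧ t ≤ n ∧ (t : ZMod n) = x := by
  have : NeZero n := ⟨by omega⟩
  by_cases h : x = 0
  · exact ⟨n, by omega, le_refl _, by simp [h]⟩
  · refine ⟨x.val, ?_, (ZMod.val_lt x).le, ZMod.natCast_zmod_val x⟩
    have := (ZMod.val_ne_zero x).2 h
    omega

theorem cast_inj_aux (n : ℕ) (t u : ℕ) (h1 : 1 ≤ t) (h2 : t ≤ n) (h3 : 1 ≤ u) (h4 : u ≤ n)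
    (h : (t : ZMod n) = (u : ZMod n)) : t = u := by
  rw [ZMod.natCast_eq_natCast_iff] at h
  rcases le_total t u with hl | hl
  · have := (Nat.modEq_iff_dvd' hl).1 h
    have := Nat.eq_zero_of_dvd_of_lt this (by omega)
    omega
  · have := (Nat.modEq_iff_dvd' hl).1 h.symm
    have := Nat.eq_zero_of_dvd_of_lt this (by omega)
    omega

theorem mem_seg_aux (n m t : ℕ) (hm : m ≤ n) (h1 : 1 ≤ t) (h2 : t ≤ n) :
    (t : ZMod n) ∈ seg n m ↔ t ≤ m := by
  unfold seg
  simp only [Finset.mem_image, Finset.mem_Icc]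
  constructor
  · rintro ⟨u, ⟨h3, h4⟩, h⟩
    have := cast_inj_aux n u t h3 (by omega) h1 h2 h
    omega
  · intro h
    exact ⟨t, ⟨h1, h⟩, rfl⟩

theorem mem_Drec_aux (n k i j t : ℕ) (hk : k ≤ n) (hi : i ≤ k) (hj : j ≤ n - k)
    (h1 : 1 ≤ t) (h2 : t ≤ n) :
    (t : ZMod n) ∈ Drec k n i j ↔ (t ≤ i ∨ (t ≤ k + j ∧ ¬ t ≤ i + j)) := by
  unfold Drec
  rw [Finset.mem_union, Finset.mem_sdiff, mem_seg_aux n _ t (by omega) h1 h2,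
    mem_seg_aux n _ t (by omega) h1 h2, mem_seg_aux n _ t (by omega) h1 h2]

theorem mem_Irec_aux (n k i j t : ℕ) (hk : k ≤ n) (hi : i ≤ n - k) (hj : j ≤ k)
    (h1 : 1 ≤ t) (h2 : t ≤ n) :
    (t : ZMod n) ∈ Irec k n i j ↔ ((t ≤ i + j ∧ ¬ t ≤ i) ∨ (t ≤ n ∧ ¬ t ≤ n - k + j)) := by
  unfold Irec
  rw [Finset.mem_union, Finset.mem_sdiff, Finset.mem_sdiff, mem_seg_aux n _ t (by omega) h1 h2,
    mem_seg_aux n _ t (by omega) h1 h2, mem_seg_aux n _ t (by omega) h1 h2,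
    mem_seg_aux n _ t (by omega) h1 h2]

theorem Drec_desc (n k i j : ℕ) (hn : 5 ≤ n) (hk : k ≤ n) (hi : i ≤ k) (hj : j ≤ n - k)
    (x : ZMod n) (hx : x ∈ Drec k n i j) (hx1 : x + 1 ∉ Drec k n i j) :
    x = (i : ZMod n) ∨ x = ((k + j : ℕ) : ZMod n) := by
  obtain ⟨t, h1, h2, rfl⟩ := rep_aux n hn x
  rw [mem_Drec_aux n k i j t hk hi hj h1 h2] at hx
  by_cases ht : t = n
  · right; congr 1; omega
  · have e : (t : ZMod n) + 1 = ((t + 1 : ℕ) : ZMod n) := by push_cast; rfl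
    rw [e, mem_Drec_aux n k i j (t+1) hk hi hj (by omega) (by omega)] at hx1
    have : t = i ∨ t = k + j := by omega
    rcases this with h | h
    · left; rw [h]
    · right; rw [h]

theorem Drec_asc (n k i j : ℕ) (hn : 5 ≤ n) (hk : k ≤ n) (hi : i ≤ k) (hj : j ≤ n - k)
    (x : ZMod n) (hx : x ∉ Drec k n i j) (hx1 : x + 1 ∈ Drec k n i j) :
    x = 0 ∨ x = ((i + j : ℕ) : ZMod n) := by
  obtain ⟨t, h1, h2, rfl⟩ := rep_aux n hn x
  rw [mem_Drec_aux n k i j t hk hi hj h1 h2] at hx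
  by_cases ht : t = n
  · left; simp [ht]
  · have e : (t : ZMod n) + 1 = ((t + 1 : ℕ) : ZMod n) := by push_cast; rfl
    rw [e, mem_Drec_aux n k i j (t+1) hk hi hj (by omega) (by omega)] at hx1
    have : t = i + j := by omega
    right; rw [this]

theorem mem_shift (n : ℕ) (S : Finset (ZMod n)) (c x : ZMod n) :
    x ∈ S.image (fun y => y - c) ↔ x + c ∈ S := by
  simp only [Finset.mem_image]
  constructor
  · rintro ⟨y, hy, rfl⟩; simpa using hy
  · intro h; exact ⟨x + c, h, by simp⟩

theorem half_aux (n s : ℕ) : (s : ZMod n) - 2 * (((s + 1) / 2 : ℕ) : ZMod n) = 0 ∨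
    (s : ZMod n) - 2 * (((s + 1) / 2 : ℕ) : ZMod n) = -1 := by
  rcases Nat.even_or_odd' s with ⟨m, h | h⟩
  · left
    have : (s + 1) / 2 = m := by omega
    rw [this, h]; push_cast; ring
  · right
    have : (s + 1) / 2 = m + 1 := by omega
    rw [this, h]; push_cast; ring

theorem CD_desc (n k : ℕ) (hn : 5 ≤ n) (hk : k ≤ n) (K : Finset (ZMod n)) (hK : K ∈ CDch k n)
    (x y : ZMod n) (hxy : x ≠ y) (hx : x ∈ K) (hx1 : x + 1 ∉ K) (hy : y ∈ K) (hy1 : y + 1 ∉ K) :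
    x + y = k ∨ x + y = k - 1 := by
  unfold CDch at hK
  simp only [Finset.mem_image, Finset.mem_product, Finset.mem_range] at hK
  obtain ⟨⟨i, j⟩, ⟨hi, hj⟩, rfl⟩ := hK
  simp only at hi hj hx hx1 hy hy1
  unfold Dch at hx hx1 hy hy1
  rw [mem_shift] at hx hx1 hy hy1
  have hc := half_aux n (i + j)
  generalize (((i + j + 1) / 2 : ℕ) : ZMod n) = c at *
  rw [add_right_comm] at hx1 hy1
  have hX := Drec_desc n k i j hn hk (by omega) (by omega) _ hx hx1
  have hY := Drec_desc n k i j hn hk (by omega) (by omega) _ hy hy1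
  have key : x + y = k + (((i + j : ℕ) : ZMod n) - 2 * c) := by
    push_cast at hX hY ⊢
    rcases hX with hX | hX <;> rcases hY with hY | hY
    · exact absurd (add_right_cancel (hX.trans hY.symm)) hxy
    · linear_combination hX + hY
    · linear_combination hX + hY
    · exact absurd (add_right_cancel (hX.trans hY.symm)) hxy
  rcases hc with hc | hc
  · left; rw [key, hc]; ring
  · right; rw [key, hc]; ring

theorem CD_asc (n k : ℕ) (hn : 5 ≤ n) (hk : k ≤ n) (K : Finset (ZMod n)) (hK : K ∈ CDch k n)
    (x y : ZMod n) (hxy : x ≠ y) (hx : x ∉ K) (hx1 : x + 1 ∈ K) (hy : y ∉ K) (hy1 : y + 1 ∈ K) :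
    x + y = 0 ∨ x + y = - 1 := by
  unfold CDch at hK
  simp only [Finset.mem_image, Finset.mem_product, Finset.mem_range] at hK
  obtain ⟨⟨i, j⟩, ⟨hi, hj⟩, rfl⟩ := hK
  simp only at hi hj hx hx1 hy hy1
  unfold Dch at hx hx1 hy hy1
  rw [mem_shift] at hx hx1 hy hy1
  have hc := half_aux n (i + j)
  generalize (((i + j + 1) / 2 : ℕ) : ZMod n) = c at *
  rw [add_right_comm] at hx1 hy1
  have hX := Drec_asc n k i j hn hk (by omega) (by omega) _ hx hx1
  have hY := Drec_asc n k i j hn hk (by omega) (by omega) _ hy hy1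
  have key : x + y = (((i + j : ℕ) : ZMod n) - 2 * c) := by
    rcases hX with hX | hX <;> rcases hY with hY | hY
    · exact absurd (add_right_cancel (hX.trans hY.symm)) hxy
    · linear_combination hX + hY
    · linear_combination hX + hY
    · exact absurd (add_right_cancel (hX.trans hY.symm)) hxy
  rw [key]; exact hc

theorem dih_aux (n : ℕ) (ρ : Equiv.Perm (ZMod n)) (h : ρ ∈ dihedral n) :
    (∃ r, ∀ x, ρ x = x + r) ∨ (∃ a, ∀ x, ρ x = a - x) := by
  unfold dihedral at h
  induction h using Subgroup.closure_induction with
  | mem x hx =>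
    rcases hx with rfl | hx
    · left; exact ⟨1, fun x => rfl⟩
    · rw [Set.mem_singleton_iff] at hx
      subst hx
      right; exact ⟨2, fun x => rfl⟩
  | one => left; exact ⟨0, fun x => by simp⟩
  | mul x y _ _ hx hy =>
    rcases hx with ⟨r, hx⟩ | ⟨r, hx⟩ <;> rcases hy with ⟨s, hy⟩ | ⟨s, hy⟩
    · left; exact ⟨s + r, fun z => by rw [Equiv.Perm.mul_apply, hy, hx]; ring⟩
    · right; exact ⟨s + r, fun z => by rw [Equiv.Perm.mul_apply, hy, hx]; ring⟩
    · right; exact ⟨r - s, fun z => by rw [Equiv.Perm.mul_apply, hy, hx]; ring⟩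
    · left; exact ⟨r - s, fun z => by rw [Equiv.Perm.mul_apply, hy, hx]; ring⟩
  | inv x _ hx =>
    rcases hx with ⟨r, hx⟩ | ⟨r, hx⟩
    · left; exact ⟨-r, fun z => by rw [Equiv.Perm.inv_eq_iff_eq, hx]; ring⟩
    · right; exact ⟨r, fun z => by rw [Equiv.Perm.inv_eq_iff_eq, hx]; ring⟩

/-- Interior checkboard labels have descents at `-c` and `i+j-c`. -/
theorem C_desc (n k i j : ℕ) (hk : k ≤ n) (hi0 : 1 ≤ i) (hi : i < n - k) (hj0 : 1 ≤ j)
    (hj : j < k) (c : ZMod n) (hc : c = (((i + j + 1) / 2 : ℕ) : ZMod n)) :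
    -c ∈ Ich k n i j ∧ -c + 1 ∉ Ich k n i j ∧ ((i + j : ℕ) : ZMod n) - c ∈ Ich k n i j ∧
      ((i + j : ℕ) : ZMod n) - c + 1 ∉ Ich k n i j ∧ -c ≠ ((i + j : ℕ) : ZMod n) - c := by
  unfold Ich
  rw [← hc]
  simp only [mem_shift]
  have e1 : -c + c = ((n : ℕ) : ZMod n) := by simp
  have e2 : -c + 1 + c = ((1 : ℕ) : ZMod n) := by simp
  have e3 : ((i + j : ℕ) : ZMod n) - c + c = ((i + j : ℕ) : ZMod n) := by simp
  have e4 : ((i + j : ℕ) : ZMod n) - c + 1 + c = ((i + j + 1 : ℕ) : ZMod n) := by push_cast; ring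
  rw [e1, e2, e3, e4]
  rw [mem_Irec_aux n k i j _ hk (by omega) (by omega) (by omega) (by omega),
    mem_Irec_aux n k i j _ hk (by omega) (by omega) (by omega) (by omega),
    mem_Irec_aux n k i j _ hk (by omega) (by omega) (by omega) (by omega),
    mem_Irec_aux n k i j _ hk (by omega) (by omega) (by omega) (by omega)]
  refine ⟨by omega, by omega, by omega, by omega, ?_⟩
  intro h
  have h' : ((n : ℕ) : ZMod n) = ((i + j : ℕ) : ZMod n) := by
    rw [← e1, h, e3]
  have := cast_inj_aux n n (i + j) (by omega) (by omega) (by omega) (by omega) h'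
  omega

theorem Ich_mem (n k i j : ℕ) (hi : i ≤ n - k) (hj : j ≤ k) : Ich k n i j ∈ Cch k n := by
  unfold Cch
  simp only [Finset.mem_image, Finset.mem_product, Finset.mem_range]
  exact ⟨(i, j), ⟨by simp only; omega, by simp only; omega⟩, rfl⟩

theorem parity_aux (n k : ℕ) (hn : n % 2 = 0) (hk : k % 2 = 1) (z : ZMod n) :
    2 * z ≠ (k : ZMod n) := by
  intro h
  have hd : 2 ∣ n := Nat.dvd_of_mod_eq_zero hn
  have h2 := congrArg (ZMod.castHom hd (ZMod 2)) h
  rw [map_mul, map_natCast, map_ofNat] at h2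
  have e : (2 : ZMod 2) = 0 := by decide
  rw [e, zero_mul] at h2
  have := (ZMod.natCast_eq_zero_iff k 2).1 h2.symm
  omega

theorem final_aux (n k : ℕ) (hn : n % 2 = 0) (hn5 : 5 ≤ n) (hk : k % 2 = 1) (z : ZMod n)
    (h1 : 2 * z = k ∨ 2 * z = k - 1) (h2 : 2 * z - 1 = k ∨ 2 * z - 1 = k - 1) : False := by
  rcases h1 with h1 | h1
  · exact parity_aux n k hn hk z h1
  · rcases h2 with h2 | h2
    · have : ((2 : ℕ) : ZMod n) = 0 := by push_cast; linear_combination h1 - h2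
      rw [ZMod.natCast_eq_zero_iff] at this
      have := Nat.le_of_dvd (by omega) this
      omega
    · exact parity_aux n k hn hk z (by linear_combination h2)

/-- if both `k` and `n−k` are odd, the dual checkboard collection is not
in the `D_n`-orbit of the checkboard collection. -/
theorem dual_checkboard_not_in_orbit
    (n k : ℕ) (hn : 5 ≤ n) (hk : 2 ≤ k) (hkn : k ≤ n - 2)
    (hkodd : k % 2 = 1) (hnkodd : (n - k) % 2 = 1) :
    ¬ ∃ ρ ∈ dihedral n, (Cch k n).image (fun I => I.image ρ) = CDch k n := by
  rintro ⟨ρ, hρ, himg⟩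
  have hkn' : k ≤ n := by omega
  have himg' : ∀ I ∈ Cch k n, I.image ρ ∈ CDch k n := fun I hI => by
    rw [← himg]; exact Finset.mem_image_of_mem _ hI
  have hmem : ∀ (I : Finset (ZMod n)) x, ρ x ∈ I.image ρ ↔ x ∈ I := fun I x => by
    simp
  have hI := himg' _ (Ich_mem n k 1 1 (by omega) (by omega))
  have hJ := himg' _ (Ich_mem n k 1 2 (by omega) (by omega))
  obtain ⟨a1, a2, a3, a4, a5⟩ :=
    C_desc n k 1 1 hkn' (by omega) (by omega) (by omega) (by omega) 1 (by norm_num)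
  obtain ⟨b1, b2, b3, b4, b5⟩ :=
    C_desc n k 1 2 hkn' (by omega) (by omega) (by omega) (by omega) 2 (by norm_num)
  rw [← hmem] at a1 a2 a3 a4 b1 b2 b3 b4
  rcases dih_aux n ρ hρ with ⟨r, hr⟩ | ⟨r, hr⟩
  · rw [hr] at a1 a2 a3 a4 b1 b2 b3 b4
    rw [add_right_comm] at a2 a4 b2 b4
    have h1 := CD_desc n k hn hkn' _ hI _ _ (fun h => a5 (add_right_cancel h)) a1 a2 a3 a4
    have h2 := CD_desc n k hn hkn' _ hJ _ _ (fun h => b5 (add_right_cancel h)) b1 b2 b3 b4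
    refine final_aux n k (by omega) hn hkodd r ?_ ?_
    · convert h1 using 2 <;> push_cast <;> ring
    · convert h2 using 2 <;> push_cast <;> ring
  · rw [hr] at a1 a2 a3 a4 b1 b2 b3 b4
    have e : ∀ x : ZMod n, r - x = (r - (x + 1)) + 1 := fun x => by ring
    rw [e] at a1 a3 b1 b3
    have h1 := CD_asc n k hn hkn' _ hI _ _ (fun h => a5 (by linear_combination -h)) a2 a1 a4 a3
    have h2 := CD_asc n k hn hkn' _ hJ _ _ (fun h => b5 (by linear_combination -h)) b2 b1 b4 b3
    push_cast at h1 h2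
    refine final_aux n 1 (by omega) hn (by norm_num) (1 - r) ?_ ?_
    · push_cast
      rcases h1 with h1 | h1
      · right; linear_combination -h1
      · left; linear_combination -h1
    · push_cast
      rcases h2 with h2 | h2
      · right; linear_combination -h2
      · left; linear_combination -h2
end

section
/- Let n ≥ 5 and 2 ≤ k ≤ n−2 be integers, and let S = { ρ ∈ D_n : ρ·C^ch_{k,n} = C^ch_{k,n} } be the stabilizer of the checkboard collection. Then: if k and n are both even, S is the cyclic subgroup generated by σ^{n/2}; if k is odd and n is even, S is the subgroup generated by σ^{n/2} and the reflection ρ₀(x) = (k−1)(n−1)/2 − x; and if n is odd, S is the subgroup generated by the reflection ρ₀(x) = (k−1)(n−1)/2 − x (in the last two cases (k−1)(n−1) is even, so ρ₀ is well defined). -/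
open Finset

lemma cb_exists_rep {n : ℕ} (hn : 5 ≤ n) (x : ZMod n) : ∃ t : ℕ, 1 ≤ t ∧ t ≤ n ∧ (t : ZMod n) = x := by
  have : NeZero n := ⟨by omega⟩
  by_cases h : x.val = 0
  · refine ⟨n, by omega, le_rfl, ?_⟩
    rw [(ZMod.val_eq_zero x).1 h]; simp
  · exact ⟨x.val, by omega, (ZMod.val_lt x).le, by simp⟩

lemma cb_cast_inj {n a b : ℕ} (ha : 1 ≤ a) (ha' : a ≤ n) (hb : 1 ≤ b) (hb' : b ≤ n)
    (h : (a : ZMod n) = (b : ZMod n)) : a = b := by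
  rw [ZMod.natCast_eq_natCast_iff] at h
  rcases le_total a b with hab | hab
  · have := (Nat.modEq_iff_dvd' hab).1 h
    by_contra hne
    have := Nat.le_of_dvd (by omega) this
    omega
  · have := (Nat.modEq_iff_dvd' hab).1 h.symm
    by_contra hne
    have := Nat.le_of_dvd (by omega) this
    omega

lemma cb_mem_seg {n m t : ℕ} (ht : 1 ≤ t) (htn : t ≤ n) (hm : m ≤ n) :
    (t : ZMod n) ∈ seg n m ↔ t ≤ m := by
  simp only [seg, Finset.mem_image, Finset.mem_Icc]
  constructor
  · rintro ⟨a, ⟨h1, h2⟩, h3⟩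
    have := cb_cast_inj h1 (h2.trans hm) ht htn h3
    omega
  · intro h
    exact ⟨t, ⟨ht, h⟩, rfl⟩

lemma cb_mem_Irec {k n i j t : ℕ} (hkn : k ≤ n) (hi : i ≤ n - k) (hj : j ≤ k)
    (ht : 1 ≤ t) (htn : t ≤ n) :
    (t : ZMod n) ∈ Irec k n i j ↔ (i < t ∧ t ≤ i + j) ∨ n - k + j < t := by
  simp only [Irec, Finset.mem_union, Finset.mem_sdiff]
  rw [cb_mem_seg ht htn (by omega), cb_mem_seg ht htn (by omega), cb_mem_seg ht htn (by omega),
    cb_mem_seg ht htn (by omega)]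
  omega

lemma cb_mem_Ich {k n i j : ℕ} (x : ZMod n) :
    x ∈ Ich k n i j ↔ x + (((i + j + 1) / 2 : ℕ) : ZMod n) ∈ Irec k n i j := by
  simp only [Ich, Finset.mem_image]
  constructor
  · rintro ⟨a, h, rfl⟩
    simpa using h
  · intro h
    exact ⟨_, h, by simp⟩

lemma cb_mem_Cch {k n : ℕ} (I : Finset (ZMod n)) :
    I ∈ Cch k n ↔ ∃ i j, i ≤ n - k ∧ j ≤ k ∧ Ich k n i j = I := by
  simp only [Cch, Finset.mem_image, Finset.mem_product, Finset.mem_range, Prod.exists]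
  constructor
  · rintro ⟨i, j, ⟨h1, h2⟩, h⟩
    exact ⟨i, j, by omega, by omega, h⟩
  · rintro ⟨i, j, h1, h2, h⟩
    exact ⟨i, j, ⟨by omega, by omega⟩, h⟩

-- right ends of arcs
lemma cb_F_sub {k n i j : ℕ} (hn : 5 ≤ n) (hkn : k + 2 ≤ n) (hi : i ≤ n - k) (hj : j ≤ k)
    (x : ZMod n) (h1 : x ∈ Irec k n i j) (h2 : x + 1 ∉ Irec k n i j) :
    x = i + j ∨ x = 0 := by
  obtain ⟨t, ht, htn, rfl⟩ := cb_exists_rep hn x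
  rcases htn.lt_or_eq with h | rfl
  · left
    rw [cb_mem_Irec (by omega) hi hj ht htn] at h1
    have : ((t : ZMod n) + 1) = ((t + 1 : ℕ) : ZMod n) := by push_cast; rfl
    rw [this, cb_mem_Irec (by omega) hi hj (by omega) (by omega)] at h2
    have : t = i + j := by omega
    rw [this]; push_cast; rfl
  · right; simp

-- points just before arcs
lemma cb_E_sub {k n i j : ℕ} (hn : 5 ≤ n) (hkn : k + 2 ≤ n) (hi : i ≤ n - k) (hj : j ≤ k)
    (x : ZMod n) (h1 : x ∉ Irec k n i j) (h2 : x + 1 ∈ Irec k n i j) :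
    x = i ∨ x = j - k := by
  obtain ⟨t, ht, htn, rfl⟩ := cb_exists_rep hn x
  rcases htn.lt_or_eq with h | rfl
  · rw [cb_mem_Irec (by omega) hi hj ht htn] at h1
    have : ((t : ZMod n) + 1) = ((t + 1 : ℕ) : ZMod n) := by push_cast; rfl
    rw [this, cb_mem_Irec (by omega) hi hj (by omega) (by omega)] at h2
    have : t = i ∨ t = n - k + j := by omega
    rcases this with rfl | rfl
    · left; rfl
    · right
      rw [Nat.cast_add, Nat.cast_sub (by omega)]; simp; ring
  · left
    have : ((t : ZMod t) + 1) = ((1 : ℕ) : ZMod t) := by simp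
    rw [this, cb_mem_Irec (by omega) hi hj (by omega) (by omega)] at h2
    have : i = 0 := by omega
    simp [this]

lemma cb_F_mem {k n i j : ℕ} (hn : 5 ≤ n) (hkn : k + 2 ≤ n) (hi : i + 1 ≤ n - k) (hj : j + 1 ≤ k)
    (hi0 : 1 ≤ i) (hj0 : 1 ≤ j) :
    ((i + j : ZMod n) ∈ Irec k n i j ∧ (i + j + 1 : ZMod n) ∉ Irec k n i j) ∧
    ((0 : ZMod n) ∈ Irec k n i j ∧ (0 + 1 : ZMod n) ∉ Irec k n i j) ∧ (i + j : ZMod n) ≠ 0 := by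
  have e1 : (i + j : ZMod n) = ((i + j : ℕ) : ZMod n) := by push_cast; rfl
  have e2 : (i + j + 1 : ZMod n) = ((i + j + 1 : ℕ) : ZMod n) := by push_cast; rfl
  have e3 : (0 : ZMod n) = (n : ℕ) := by simp
  have e4 : (0 + 1 : ZMod n) = (1 : ℕ) := by simp
  rw [e4, e2, e1, e3]
  rw [cb_mem_Irec (by omega) (by omega) (by omega) (by omega) (by omega),
    cb_mem_Irec (by omega) (by omega) (by omega) (by omega) (by omega),
    cb_mem_Irec (by omega) (by omega) (by omega) (by omega) (by omega),
    cb_mem_Irec (by omega) (by omega) (by omega) (by omega) (by omega)]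
  refine ⟨by omega, by omega, fun h => ?_⟩
  have := cb_cast_inj (by omega) (by omega) (by omega) (by omega) h
  omega

lemma cb_two_half {n : ℕ} (d : ℕ) : (2 * (((d + 1) / 2 : ℕ) : ZMod n)) = d + ((d % 2 : ℕ) : ZMod n) := by
  have : 2 * ((d + 1) / 2) = d + d % 2 := by omega
  exact_mod_cast congrArg (Nat.cast : ℕ → ZMod n) this

/-- the key constraint from a translation. -/
lemma cb_trans_key {k n i j : ℕ} (hn : 5 ≤ n) (hkn : k + 2 ≤ n) (hi : i + 1 ≤ n - k)
    (hj : j + 1 ≤ k) (hi0 : 1 ≤ i) (hj0 : 1 ≤ j) (r : ZMod n)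
    (h : (Cch k n).image (fun I => I.image (Equiv.addRight r)) = Cch k n) :
    2 * r - (((i + j) % 2 : ℕ) : ZMod n) = 0 ∨ 2 * r - (((i + j) % 2 : ℕ) : ZMod n) = -1 := by
  obtain ⟨⟨a1, a2⟩, ⟨b1, b2⟩, hne⟩ := cb_F_mem hn hkn hi hj hi0 hj0
  have hm : (Ich k n i j).image (Equiv.addRight r) ∈ Cch k n := by
    rw [← h]; exact Finset.mem_image_of_mem _ ((cb_mem_Cch _).2 ⟨i, j, by omega, by omega, rfl⟩)
  obtain ⟨i', j', hi', hj', he⟩ := (cb_mem_Cch _).1 hm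
  set s : ZMod n := (((i + j + 1) / 2 : ℕ) : ZMod n) with hs
  set s' : ZMod n := (((i' + j' + 1) / 2 : ℕ) : ZMod n) with hs'
  have tr : ∀ y : ZMod n, y ∈ Irec k n i j ↔ y - s + r + s' ∈ Irec k n i' j' := by
    intro y
    have e : y - s + r + s' ∈ Irec k n i' j' ↔ y - s + r ∈ Ich k n i' j' := (cb_mem_Ich _).symm
    rw [e, he]
    have : y - s + r ∈ (Ich k n i j).image (Equiv.addRight r) ↔ y - s ∈ Ich k n i j := by
      simp
    rw [this, cb_mem_Ich, ← hs]; simp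
  have sh : ∀ y : ZMod n, y + 1 - s + r + s' = (y - s + r + s') + 1 := by intro y; ring
  rw [tr] at a1 a2 b1 b2
  rw [sh] at a2 b2
  have A := cb_F_sub hn hkn hi' hj' _ a1 a2
  have B := cb_F_sub hn hkn hi' hj' _ b1 b2
  have t1 : 2 * s = _ := cb_two_half (n := n) (i + j)
  have t2 : 2 * s' = _ := cb_two_half (n := n) (i' + j')
  push_cast at t1 t2
  have S : 2 * r - (((i + j) % 2 : ℕ) : ZMod n) = - (((i' + j') % 2 : ℕ) : ZMod n) := by
    rcases A with A | A <;> rcases B with B | B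
    · exact absurd (by linear_combination A - B) hne
    · push_cast; linear_combination A + B + t1 - t2
    · push_cast; linear_combination A + B + t1 - t2
    · exact absurd (by linear_combination A - B) hne
  rw [S]
  rcases Nat.mod_two_eq_zero_or_one (i' + j') with q | q <;> simp [q]

/-- the key constraint from a reflection. -/
lemma cb_refl_key {k n i j : ℕ} (hn : 5 ≤ n) (hkn : k + 2 ≤ n) (hi : i + 1 ≤ n - k)
    (hj : j + 1 ≤ k) (hi0 : 1 ≤ i) (hj0 : 1 ≤ j) (c : ZMod n)
    (h : (Cch k n).image (fun I => I.image (Equiv.subLeft c)) = Cch k n) :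
    2 * c - 2 + k + (((i + j) % 2 : ℕ) : ZMod n) = 0 ∨
    2 * c - 2 + k + (((i + j) % 2 : ℕ) : ZMod n) = -1 := by
  obtain ⟨⟨a1, a2⟩, ⟨b1, b2⟩, hne⟩ := cb_F_mem hn hkn hi hj hi0 hj0
  have hm : (Ich k n i j).image (Equiv.subLeft c) ∈ Cch k n := by
    rw [← h]; exact Finset.mem_image_of_mem _ ((cb_mem_Cch _).2 ⟨i, j, by omega, by omega, rfl⟩)
  obtain ⟨i', j', hi', hj', he⟩ := (cb_mem_Cch _).1 hm
  set s : ZMod n := (((i + j + 1) / 2 : ℕ) : ZMod n) with hs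
  set s' : ZMod n := (((i' + j' + 1) / 2 : ℕ) : ZMod n) with hs'
  have tr : ∀ y : ZMod n, y ∈ Irec k n i j ↔ c - (y - s) + s' ∈ Irec k n i' j' := by
    intro y
    have e : c - (y - s) + s' ∈ Irec k n i' j' ↔ c - (y - s) ∈ Ich k n i' j' := (cb_mem_Ich _).symm
    rw [e, he]
    have : c - (y - s) ∈ (Ich k n i j).image (Equiv.subLeft c) ↔ y - s ∈ Ich k n i j := by
      simp
    rw [this, cb_mem_Ich, ← hs]; simp
  have sh : ∀ y : ZMod n, c - (y - s) + s' = (c - (y + 1 - s) + s') + 1 := by intro y; ring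
  rw [tr] at a1 a2 b1 b2
  rw [sh] at a1 b1
  have A := cb_E_sub hn hkn hi' hj' _ a2 a1
  have B := cb_E_sub hn hkn hi' hj' _ b2 b1
  have t1 : 2 * s = _ := cb_two_half (n := n) (i + j)
  have t2 : 2 * s' = _ := cb_two_half (n := n) (i' + j')
  push_cast at t1 t2
  have S : 2 * c - 2 + k + (((i + j) % 2 : ℕ) : ZMod n) = - (((i' + j') % 2 : ℕ) : ZMod n) := by
    rcases A with A | A <;> rcases B with B | B
    · exact absurd (by linear_combination B - A) hne
    · push_cast; linear_combination A + B - t1 - t2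
    · push_cast; linear_combination A + B - t1 - t2
    · exact absurd (by linear_combination B - A) hne
  rw [S]
  rcases Nat.mod_two_eq_zero_or_one (i' + j') with q | q <;> simp [q]

lemma cb_small_ne {n m : ℕ} (hm : 1 ≤ m) (hmn : m < n) : (m : ZMod n) ≠ 0 := by
  intro h
  have : (m : ZMod n) = (n : ℕ) := by simpa using h
  have := cb_cast_inj hm hmn.le (by omega) le_rfl this
  omega

lemma cb_trans {k n : ℕ} (hn : 5 ≤ n) (hk : 2 ≤ k) (hkn : k + 2 ≤ n) (r : ZMod n)
    (h : (Cch k n).image (fun I => I.image (Equiv.addRight r)) = Cch k n) : 2 * r = 0 := by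
  have h1 := cb_trans_key (i := 1) (j := 1) hn hkn (by omega) (by omega) (by omega) (by omega) r h
  have h2 : 2 * r - 1 = 0 ∨ 2 * r - 1 = -1 := by
    by_cases h3 : 3 ≤ k
    · simpa using cb_trans_key (i := 1) (j := 2) hn hkn (by omega) (by omega) (by omega) (by omega) r h
    · simpa using cb_trans_key (i := 2) (j := 1) hn hkn (by omega) (by omega) (by omega) (by omega) r h
  norm_num at h1
  have n2 : ((2 : ℕ) : ZMod n) ≠ 0 := cb_small_ne (by omega) (by omega)
  rcases h1 with h1 | h1
  · exact h1
  · rcases h2 with h2 | h2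
    · exact absurd (by push_cast; linear_combination h1 - h2) n2
    · linear_combination h2

lemma cb_refl {k n : ℕ} (hn : 5 ≤ n) (hk : 2 ≤ k) (hkn : k + 2 ≤ n) (c : ZMod n)
    (h : (Cch k n).image (fun I => I.image (Equiv.subLeft c)) = Cch k n) : 2 * c = 1 - k := by
  have h1 := cb_refl_key (i := 1) (j := 1) hn hkn (by omega) (by omega) (by omega) (by omega) c h
  have h2 : 2 * c - 2 + k + 1 = 0 ∨ 2 * c - 2 + k + 1 = -1 := by
    by_cases h3 : 3 ≤ k
    · simpa using cb_refl_key (i := 1) (j := 2) hn hkn (by omega) (by omega) (by omega) (by omega) c h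
    · simpa using cb_refl_key (i := 2) (j := 1) hn hkn (by omega) (by omega) (by omega) (by omega) c h
  have h1' : 2 * c - 2 + k = 0 ∨ 2 * c - 2 + k = -1 := by simpa using h1
  have n2 : ((2 : ℕ) : ZMod n) ≠ 0 := cb_small_ne (by omega) (by omega)
  rcases h1' with h1 | h1
  · rcases h2 with h2 | h2
    · linear_combination h2
    · exact absurd (by push_cast; linear_combination h2 - h1) n2
  · linear_combination h1

-- symmetries of rectangle labels
lemma cb_sym1 {k n i j : ℕ} (hn : 5 ≤ n) (hkn : k + 2 ≤ n) (hi : i ≤ n - k) (hj : j ≤ k)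
    (y : ZMod n) : y ∈ Irec k n (n - k - i) (k - j) ↔ y + (i + j) ∈ Irec k n i j := by
  obtain ⟨t, ht, htn, rfl⟩ := cb_exists_rep hn y
  rw [cb_mem_Irec (by omega) (by omega) (by omega) ht htn]
  by_cases hc : t + (i + j) ≤ n
  · have : (t + (i + j) : ZMod n) = ((t + (i + j) : ℕ) : ZMod n) := by push_cast; rfl
    rw [this, cb_mem_Irec (by omega) (by omega) (by omega) (by omega) (by omega)]
    omega
  · have : (t + (i + j) : ZMod n) = ((t + (i + j) - n : ℕ) : ZMod n) := by
      rw [Nat.cast_sub (by omega)]; simp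
    rw [this, cb_mem_Irec (by omega) (by omega) (by omega) (by omega) (by omega)]
    omega

lemma cb_sym2 {k n i j : ℕ} (hn : 5 ≤ n) (hkn : k + 2 ≤ n) (hi : i ≤ n - k) (hj : j ≤ k)
    (y : ZMod n) : y ∈ Irec k n i (k - j) ↔ (i + 1) - y ∈ Irec k n i j := by
  obtain ⟨t, ht, htn, rfl⟩ := cb_exists_rep hn y
  rw [cb_mem_Irec (by omega) (by omega) (by omega) ht htn]
  by_cases hc : t ≤ i
  · have : ((i + 1) - t : ZMod n) = ((i + 1 - t : ℕ) : ZMod n) := by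
      rw [Nat.cast_sub (by omega)]; simp
    rw [this, cb_mem_Irec (by omega) (by omega) (by omega) (by omega) (by omega)]
    omega
  · have : ((i + 1) - t : ZMod n) = ((n + i + 1 - t : ℕ) : ZMod n) := by
      rw [Nat.cast_sub (by omega)]; simp
    rw [this, cb_mem_Irec (by omega) (by omega) (by omega) (by omega) (by omega)]
    omega

lemma cb_sym3 {k n i j : ℕ} (hn : 5 ≤ n) (hkn : k + 2 ≤ n) (hi : i ≤ n - k) (hj : j ≤ k)
    (y : ZMod n) : y ∈ Irec k n (n - k - i) j ↔ (j + 1 - k) - y ∈ Irec k n i j := by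
  obtain ⟨t, ht, htn, rfl⟩ := cb_exists_rep hn y
  rw [cb_mem_Irec (by omega) (by omega) (by omega) ht htn]
  by_cases hc : t ≤ n - k + j
  · have : ((j + 1 - k) - t : ZMod n) = ((n - k + j + 1 - t : ℕ) : ZMod n) := by
      rw [Nat.cast_sub (by omega), Nat.cast_add, Nat.cast_add, Nat.cast_sub (by omega)]; simp; ring
    rw [this, cb_mem_Irec (by omega) (by omega) (by omega) (by omega) (by omega)]
    omega
  · have : ((j + 1 - k) - t : ZMod n) = ((n + (n - k + j + 1) - t : ℕ) : ZMod n) := by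
      rw [Nat.cast_sub (by omega), Nat.cast_add, Nat.cast_add, Nat.cast_add, Nat.cast_sub (by omega)]
      simp; ring
    rw [this, cb_mem_Irec (by omega) (by omega) (by omega) (by omega) (by omega)]
    omega

lemma cb_stab_of_maps {n k : ℕ} (ρ : Equiv.Perm (ZMod n))
    (h : ∀ i j, i ≤ n - k → j ≤ k → (Ich k n i j).image ρ ∈ Cch k n) :
    (Cch k n).image (fun I => I.image ρ) = Cch k n := by
  apply Finset.eq_of_subset_of_card_le
  · intro J hJ
    obtain ⟨I, hI, rfl⟩ := Finset.mem_image.1 hJ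
    obtain ⟨i, j, hi, hj, rfl⟩ := (cb_mem_Cch _).1 hI
    exact h i j hi hj
  · rw [Finset.card_image_of_injective _ (Finset.image_injective ρ.injective)]

lemma cb_rot {n k : ℕ} (hn : 5 ≤ n) (hkn : k + 2 ≤ n) (he : n % 2 = 0) :
    (Cch k n).image (fun I => I.image (Equiv.addRight (((n / 2 : ℕ) : ZMod n)))) = Cch k n := by
  apply cb_stab_of_maps
  intro i j hi hj
  refine (cb_mem_Cch _).2 ⟨n - k - i, k - j, by omega, by omega, ?_⟩
  ext x
  have : x ∈ (Ich k n i j).image (Equiv.addRight (((n / 2 : ℕ) : ZMod n)))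
      ↔ x - ((n / 2 : ℕ) : ZMod n) ∈ Ich k n i j := by
    simp only [Finset.mem_image, Equiv.coe_addRight]
    constructor
    · rintro ⟨a, h, rfl⟩; simpa using h
    · intro h; exact ⟨_, h, by simp⟩
  rw [this, cb_mem_Ich, cb_mem_Ich, cb_sym1 hn hkn hi hj]
  have e : (n - k - i + (k - j) + 1) / 2 + (i + j) + n / 2 = n + (i + j + 1) / 2 := by omega
  have e' := congrArg (Nat.cast : ℕ → ZMod n) e
  push_cast at e'
  simp only [CharP.cast_eq_zero] at e'
  apply iff_of_eq
  congr 1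
  push_cast
  linear_combination e'

lemma cb_mem_subLeft {n : ℕ} (c x : ZMod n) (I : Finset (ZMod n)) :
    x ∈ I.image (Equiv.subLeft c) ↔ c - x ∈ I := by
  simp only [Finset.mem_image, Equiv.subLeft_apply]
  constructor
  · rintro ⟨a, h, rfl⟩; simpa using h
  · intro h; exact ⟨_, h, by simp⟩

lemma cb_ref {n k : ℕ} (hn : 5 ≤ n) (hk : 2 ≤ k) (hkn : k + 2 ≤ n) (hp : k % 2 = 1 ∨ n % 2 = 1) :
    (Cch k n).image (fun I => I.image (Equiv.subLeft ((((k - 1) * (n - 1)) / 2 : ℕ) : ZMod n)))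
      = Cch k n := by
  apply cb_stab_of_maps
  intro i j hi hj
  by_cases hko : k % 2 = 1
  · refine (cb_mem_Cch _).2 ⟨i, k - j, by omega, by omega, ?_⟩
    ext x
    rw [cb_mem_subLeft, cb_mem_Ich, cb_mem_Ich, cb_sym2 hn hkn hi hj]
    obtain ⟨m, rfl⟩ : ∃ m, k = 2 * m + 1 := ⟨k / 2, by omega⟩
    have c0 : (2 * m + 1 - 1) * (n - 1) / 2 = m * (n - 1) := by
      rw [Nat.add_sub_cancel, mul_assoc, Nat.mul_div_cancel_left _ (by omega)]
    have e : (i + (2 * m + 1 - j) + 1) / 2 + (i + j + 1) / 2 = i + m + 1 := by omega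
    have e' := congrArg (Nat.cast : ℕ → ZMod n) e
    rw [c0, Nat.cast_mul, Nat.cast_sub (show 1 ≤ n by omega)]
    rw [Nat.cast_add] at e'
    apply iff_of_eq
    congr 1
    push_cast at e' ⊢
    simp only [CharP.cast_eq_zero]
    linear_combination -e'
  · refine (cb_mem_Cch _).2 ⟨n - k - i, j, by omega, by omega, ?_⟩
    ext x
    rw [cb_mem_subLeft, cb_mem_Ich, cb_mem_Ich, cb_sym3 hn hkn hi hj]
    obtain ⟨m, rfl⟩ : ∃ m, k = 2 * m := ⟨k / 2, by omega⟩
    obtain ⟨p, hp⟩ : ∃ p, n = 2 * p + 1 := ⟨n / 2, by omega⟩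
    have c0 : (2 * m - 1) * (n - 1) / 2 = (2 * m - 1) * p := by
      rw [hp, Nat.add_sub_cancel, mul_left_comm, Nat.mul_div_cancel_left _ (by omega)]
    have e : (n - 2 * m - i + j + 1) / 2 + (i + j + 1) / 2 + m = j + p + 1 := by omega
    have e' := congrArg (Nat.cast : ℕ → ZMod n) e
    have hp' := congrArg (Nat.cast : ℕ → ZMod n) hp
    rw [c0, Nat.cast_mul (2 * m - 1) p, Nat.cast_sub (show 1 ≤ 2 * m by omega)]
    apply iff_of_eq
    congr 1
    push_cast at e' hp' ⊢
    simp only [CharP.cast_eq_zero] at hp'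
    linear_combination -e' + m * hp'

lemma cb_pow {n : ℕ} (m : ℕ) : (Equiv.addRight (1 : ZMod n)) ^ m = Equiv.addRight (m : ZMod n) := by
  induction m with
  | zero => ext z; simp
  | succ m ih => rw [pow_succ, ih]; ext z; simp; ring

lemma cb_dihedral_cases {n : ℕ} (ρ : Equiv.Perm (ZMod n)) (h : ρ ∈ dihedral n) :
    (∃ r, ρ = Equiv.addRight r) ∨ ∃ c, ρ = Equiv.subLeft c := by
  refine Subgroup.closure_induction (p := fun ρ _ => (∃ r, ρ = Equiv.addRight r) ∨ ∃ c, ρ = Equiv.subLeft c)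
    ?_ ?_ ?_ ?_ h
  · rintro x (rfl | rfl)
    · exact Or.inl ⟨_, rfl⟩
    · exact Or.inr ⟨_, rfl⟩
  · exact Or.inl ⟨0, by ext; simp⟩
  · rintro x y _ _ (⟨a, rfl⟩ | ⟨a, rfl⟩) (⟨b, rfl⟩ | ⟨b, rfl⟩)
    · exact Or.inl ⟨b + a, by ext z; simp [add_assoc]⟩
    · exact Or.inr ⟨b + a, by ext z; simp; ring⟩
    · exact Or.inr ⟨a - b, by ext z; simp; ring⟩
    · exact Or.inl ⟨a - b, by ext z; simp; ring⟩
  · rintro x _ (⟨a, rfl⟩ | ⟨a, rfl⟩)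
    · exact Or.inl ⟨-a, by ext z; simp⟩
    · exact Or.inr ⟨a, by ext z; simp [Equiv.Perm.inv_def]; ring⟩

lemma cb_add_mem {n : ℕ} (hn : 5 ≤ n) (r : ZMod n) : Equiv.addRight r ∈ dihedral n := by
  obtain ⟨t, -, -, rfl⟩ := cb_exists_rep hn r
  rw [← cb_pow]
  exact Subgroup.pow_mem _ (Subgroup.subset_closure (by simp)) _

lemma cb_sub_mem {n : ℕ} (hn : 5 ≤ n) (c : ZMod n) : Equiv.subLeft c ∈ dihedral n := by
  have : Equiv.subLeft c = Equiv.addRight (c - 2) * Equiv.subLeft (2 : ZMod n) := by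
    ext z; simp
  rw [this]
  exact Subgroup.mul_mem _ (cb_add_mem hn _) (Subgroup.subset_closure (by simp))

/-- the stabilizer as a subgroup -/
def cbStab (k n : ℕ) : Subgroup (Equiv.Perm (ZMod n)) where
  carrier := {ρ | ρ ∈ dihedral n ∧ (Cch k n).image (fun I => I.image ρ) = Cch k n}
  one_mem' := ⟨Subgroup.one_mem _, by simp⟩
  mul_mem' := by
    rintro a b ⟨ha, ha'⟩ ⟨hb, hb'⟩
    refine ⟨Subgroup.mul_mem _ ha hb, ?_⟩
    nth_rewrite 2 [← ha']
    nth_rewrite 2 [← hb']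
    rw [Finset.image_image]
    congr 1
    funext I
    simp [Finset.image_image]
  inv_mem' := by
    rintro a ⟨ha, ha'⟩
    refine ⟨Subgroup.inv_mem _ ha, ?_⟩
    nth_rewrite 1 [← ha']
    rw [Finset.image_image]
    have : ((fun I : Finset (ZMod n) => I.image (a⁻¹ : Equiv.Perm (ZMod n))) ∘ fun I => I.image a) = id := by
      funext I
      have e : ((a⁻¹ : Equiv.Perm (ZMod n)) : ZMod n → ZMod n) ∘ a = id := by
        funext z; simp
      simp only [Function.comp, Finset.image_image]
      simpa using congrArg (fun f => I.image f) e
    rw [this, Finset.image_id]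

lemma cb_tors {n : ℕ} (hn : 5 ≤ n) (r : ZMod n) (h : 2 * r = 0) :
    r = 0 ∨ (n % 2 = 0 ∧ r = ((n / 2 : ℕ) : ZMod n)) := by
  obtain ⟨t, h1, h2, rfl⟩ := cb_exists_rep hn r
  have : ((2 * t : ℕ) : ZMod n) = 0 := by push_cast; exact h
  rw [ZMod.natCast_eq_zero_iff] at this
  obtain ⟨q, hq⟩ := this
  have : q = 1 ∨ q = 2 := by
    have : q < 3 := by by_contra hc; nlinarith
    have : q ≠ 0 := by rintro rfl; omega
    omega
  rcases this with rfl | rfl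
  · right; refine ⟨by omega, ?_⟩
    congr 1; omega
  · left
    have : t = n := by omega
    simp [this]

lemma cb_c0 {n k : ℕ} (hn : 5 ≤ n) (hk : 2 ≤ k) (hp : k % 2 = 1 ∨ n % 2 = 1) :
    2 * ((((k - 1) * (n - 1)) / 2 : ℕ) : ZMod n) = 1 - k := by
  have hd : 2 ∣ (k - 1) * (n - 1) := by
    rcases hp with h | h
    · exact Dvd.dvd.mul_right (by omega) _
    · exact Dvd.dvd.mul_left (by omega) _
  have := congrArg (Nat.cast : ℕ → ZMod n) (Nat.mul_div_cancel' hd)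
  rw [Nat.cast_mul, Nat.cast_mul, Nat.cast_sub (show 1 ≤ n by omega),
    Nat.cast_sub (show 1 ≤ k by omega)] at this
  simp only [CharP.cast_eq_zero, Nat.cast_ofNat, Nat.cast_one] at this
  rw [this]; ring

lemma cb_no_refl {n k : ℕ} (hn : 5 ≤ n) (hk : 2 ≤ k) (h1 : k % 2 = 0) (h2 : n % 2 = 0)
    (c : ZMod n) (h : 2 * c = 1 - k) : False := by
  obtain ⟨t, -, -, rfl⟩ := cb_exists_rep hn c
  have : ((2 * t + (k - 1) : ℕ) : ZMod n) = 0 := by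
    rw [Nat.cast_add, Nat.cast_sub (by omega)]; push_cast; rw [h]; ring
  rw [ZMod.natCast_eq_zero_iff] at this
  have : 2 ∣ 2 * t + (k - 1) := Dvd.dvd.trans (by omega) this
  omega

/-- the stabilizer of the checkboard collection in `D_n`. -/
theorem checkboard_stabilizer
    (n k : ℕ) (hn : 5 ≤ n) (hk : 2 ≤ k) (hkn : k ≤ n - 2) :
    (k % 2 = 0 → n % 2 = 0 →
      {ρ : Equiv.Perm (ZMod n) | ρ ∈ dihedral n ∧ (Cch k n).image (fun I => I.image ρ) = Cch k n}
        = ↑(Subgroup.closure {(Equiv.addRight (1 : ZMod n)) ^ (n / 2)})) ∧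
    (k % 2 = 1 → n % 2 = 0 →
      {ρ : Equiv.Perm (ZMod n) | ρ ∈ dihedral n ∧ (Cch k n).image (fun I => I.image ρ) = Cch k n}
        = ↑(Subgroup.closure {(Equiv.addRight (1 : ZMod n)) ^ (n / 2),
            Equiv.subLeft ((((k - 1) * (n - 1)) / 2 : ℕ) : ZMod n)})) ∧
    (n % 2 = 1 →
      {ρ : Equiv.Perm (ZMod n) | ρ ∈ dihedral n ∧ (Cch k n).image (fun I => I.image ρ) = Cch k n}
        = ↑(Subgroup.closure {Equiv.subLeft ((((k - 1) * (n - 1)) / 2 : ℕ) : ZMod n)})) := by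
  have hkn' : k + 2 ≤ n := by omega
  refine ⟨fun h1 h2 => ?_, fun h1 h2 => ?_, fun h2 => ?_⟩
  · apply Set.Subset.antisymm
    · rintro ρ ⟨hρ, hst⟩
      rw [SetLike.mem_coe]
      rcases cb_dihedral_cases ρ hρ with ⟨r, rfl⟩ | ⟨c, rfl⟩
      · rcases cb_tors hn r (cb_trans hn hk hkn' r hst) with rfl | ⟨-, rfl⟩
        · rw [Equiv.addRight_zero]; exact Subgroup.one_mem _
        · rw [← cb_pow]; exact Subgroup.subset_closure (by simp)
      · exact (cb_no_refl hn hk h1 h2 c (cb_refl hn hk hkn' c hst)).elim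
    · change Subgroup.closure _ ≤ cbStab k n
      rw [Subgroup.closure_le, Set.singleton_subset_iff, cb_pow]
      exact ⟨cb_add_mem hn _, cb_rot hn hkn' h2⟩
  · apply Set.Subset.antisymm
    · rintro ρ ⟨hρ, hst⟩
      rw [SetLike.mem_coe]
      rcases cb_dihedral_cases ρ hρ with ⟨r, rfl⟩ | ⟨c, rfl⟩
      · rcases cb_tors hn r (cb_trans hn hk hkn' r hst) with rfl | ⟨-, rfl⟩
        · rw [Equiv.addRight_zero]; exact Subgroup.one_mem _
        · rw [← cb_pow]; exact Subgroup.subset_closure (by simp)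
      · have hc := cb_refl hn hk hkn' c hst
        have hc0 := cb_c0 (n := n) hn hk (Or.inl h1)
        generalize ((((k - 1) * (n - 1)) / 2 : ℕ) : ZMod n) = c0 at hc0 ⊢
        rcases cb_tors hn (c - c0) (by linear_combination hc - hc0) with h | ⟨-, h⟩
        · rw [sub_eq_zero.1 h]; exact Subgroup.subset_closure (by simp)
        · have : Equiv.subLeft c = (Equiv.addRight (1 : ZMod n)) ^ (n / 2) * Equiv.subLeft c0 := by
            rw [cb_pow, ← h]; ext z; simp
          rw [this]
          exact Subgroup.mul_mem _ (Subgroup.subset_closure (by simp))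
            (Subgroup.subset_closure (by simp))
    · change Subgroup.closure _ ≤ cbStab k n
      rw [Subgroup.closure_le, Set.insert_subset_iff, Set.singleton_subset_iff, cb_pow]
      exact ⟨⟨cb_add_mem hn _, cb_rot hn hkn' h2⟩, cb_sub_mem hn _, cb_ref hn hk hkn' (Or.inl h1)⟩
  · apply Set.Subset.antisymm
    · rintro ρ ⟨hρ, hst⟩
      rw [SetLike.mem_coe]
      rcases cb_dihedral_cases ρ hρ with ⟨r, rfl⟩ | ⟨c, rfl⟩
      · rcases cb_tors hn r (cb_trans hn hk hkn' r hst) with rfl | ⟨h3, rfl⟩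
        · rw [Equiv.addRight_zero]; exact Subgroup.one_mem _
        · omega
      · have hc := cb_refl hn hk hkn' c hst
        have hc0 := cb_c0 (n := n) hn hk (Or.inr h2)
        generalize ((((k - 1) * (n - 1)) / 2 : ℕ) : ZMod n) = c0 at hc0 ⊢
        rcases cb_tors hn (c - c0) (by linear_combination hc - hc0) with h | ⟨h3, h⟩
        · rw [sub_eq_zero.1 h]; exact Subgroup.subset_closure (by simp)
        · omega
    · change Subgroup.closure _ ≤ cbStab k n
      rw [Subgroup.closure_le, Set.singleton_subset_iff]
      exact ⟨cb_sub_mem hn _, cb_ref hn hk hkn' (Or.inr h2)⟩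
end

section
/- Let r, n be positive integers with r ≥ 2 and r ≤ n, let A be an r×n matrix over ℂ, let S ⊆ {1,…,n} with |S| = r−2, and let a < b < c < d be elements of {1,…,n} ∖ S. Then the maximal minors of A satisfy the three-term Plücker relation p_{S∪{a,c}}(A) · p_{S∪{b,d}}(A) = p_{S∪{a,b}}(A) · p_{S∪{c,d}}(A) + p_{S∪{b,c}}(A) · p_{S∪{a,d}}(A). -/
open Finset

/-- The Plücker coordinate `p_J(A)`: the determinant of the `r×r` submatrix of the
`r×n` matrix `A` formed by the columns indexed by `J`, taken in increasing order
(and `0` if `J` does not have exactly `r` elements). -/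
noncomputable def pluckerFin (r n : ℕ) (A : Matrix (Fin r) (Fin n) ℂ)
    (J : Finset (Fin n)) : ℂ :=
  if h : J.card = r then
    (A.submatrix id (fun i => ((J.orderIsoOfFin h i : J) : Fin n))).det
  else 0

/-- minor of `A` with the listed columns -/
noncomputable def colMinor {r n : ℕ} (A : Matrix (Fin r) (Fin n) ℂ) (v : Fin r → Fin n) : ℂ :=
  (A.submatrix id v).det

theorem colMinor_insertNth {k n : ℕ} (A : Matrix (Fin (k+1)) (Fin n) ℂ) (p : Fin (k+1))
    (x : Fin n) (v : Fin k → Fin n) :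
    colMinor A (p.insertNth x v : Fin (k+1) → Fin n)
      = (-1) ^ (p : ℕ) * colMinor A (Fin.cons x v : Fin (k+1) → Fin n) := by
  unfold colMinor
  rw [← Fin.cons_comp_cycleRange]
  have := Matrix.det_permute' p.cycleRange (A.submatrix id (Fin.cons x v : Fin (k+1) → Fin n))
  rw [Matrix.submatrix_submatrix] at this
  rw [Function.id_comp] at this
  rw [this, Fin.sign_cycleRange]
  simp

theorem colMinor_exchange {k n : ℕ} (A : Matrix (Fin (k+1)) (Fin n) ℂ)
    (v : Fin (k+1) → Fin n) (w : Fin n) (u : Fin k → Fin n) :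
    ∑ i, colMinor A (Function.update v i w) * colMinor A (Fin.cons (v i) u : Fin (k+1) → Fin n)
      = colMinor A v * colMinor A (Fin.cons w u : Fin (k+1) → Fin n) := by
  have key : ∀ j, ∑ i, A j (v i) * colMinor A (Function.update v i w) = colMinor A v * A j w := by
    intro j
    have h := congrFun (Matrix.mulVec_cramer (A.submatrix id v) (fun j => A j w)) j
    have h2 : ∀ i, (A.submatrix id v).cramer (fun j => A j w) i
        = colMinor A (Function.update v i w) := by
      intro i
      rw [Matrix.cramer_apply]
      unfold colMinor
      congr 1
      ext a b
      by_cases hb : b = i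
      · subst hb; simp
      · simp [hb]
    simp only [Matrix.mulVec, dotProduct, h2, Pi.smul_apply, smul_eq_mul] at h
    exact h
  have lap : ∀ x, colMinor A (Fin.cons x u : Fin (k+1) → Fin n)
      = ∑ j : Fin (k+1), A j x * ((-1) ^ (j : ℕ) * (A.submatrix j.succAbove u).det) := by
    intro x
    unfold colMinor
    rw [Matrix.det_succ_column_zero]
    refine Finset.sum_congr rfl fun j _ => ?_
    rw [Matrix.submatrix_submatrix]
    have : (Fin.cons x u : Fin (k+1) → Fin n) ∘ Fin.succ = u := by ext; simp
    rw [this]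
    simp
    ring
  simp only [lap, Finset.mul_sum]
  rw [Finset.sum_comm]
  refine Finset.sum_congr rfl fun j _ => ?_
  rw [← mul_assoc, ← key j, Finset.sum_mul]
  refine Finset.sum_congr rfl fun i _ => ?_
  ring

theorem colMinor_three {m n : ℕ} (A : Matrix (Fin (m+2)) (Fin n) ℂ)
    (s : Fin m → Fin n) (f : Fin n → Fin n → ℂ)
    (hf : ∀ x y, f x y = colMinor A (Fin.cons x (Fin.cons y s : Fin (m+1) → Fin n)))
    (a b c d : Fin n) : f a c * f b d = f a b * f c d + f b c * f a d := by
  have h := colMinor_exchange A (Fin.cons a (Fin.cons b s : Fin (m+1) → Fin n)) c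
    (Fin.cons d s : Fin (m+1) → Fin n)
  rw [Fin.sum_univ_succ, Fin.sum_univ_succ, Finset.sum_eq_zero] at h
  · simp only [Fin.update_cons_zero, ← Fin.cons_update, Fin.cons_zero, Fin.cons_succ,
      ← hf] at h
    have anti : f c b = - f b c := by
      have h1 := colMinor_insertNth A 1 b (Fin.cons c s : Fin (m+1) → Fin n)
      have h2 : (Fin.insertNth 1 b (Fin.cons c s : Fin (m+1) → Fin n) : Fin (m+2) → Fin n)
          = Fin.cons c (Fin.cons b s : Fin (m+1) → Fin n) := by
        have := Fin.insertNth_succ_cons (0 : Fin (m+1)) b c s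
        rw [Fin.insertNth_zero'] at this
        exact this
      rw [h2, ← hf, ← hf] at h1
      simpa using h1
    rw [anti] at h
    linear_combination h
  · intro i _
    refine mul_eq_zero_of_right _ ?_
    unfold colMinor
    refine Matrix.det_zero_of_column_eq (i := 0) (j := i.succ.succ) (Fin.succ_ne_zero _).symm ?_
    intro k
    simp

theorem enum_insert {k n : ℕ} (T : Finset (Fin n)) (y : Fin n) (hy : y ∉ T) (hT : T.card = k)
    (hT' : (insert y T).card = k + 1) :
    ∃ p : Fin (k+1), (p : ℕ) = (T.filter (· < y)).card ∧
      ((insert y T).orderEmbOfFin hT' : Fin (k+1) → Fin n)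
        = p.insertNth y (T.orderEmbOfFin hT) := by
  obtain ⟨p, hp⟩ : y ∈ Set.range ((insert y T).orderEmbOfFin hT') := by
    rw [Finset.range_orderEmbOfFin]; simp
  refine ⟨p, ?_, ?_⟩
  · have : T.filter (· < y) = (Finset.Iio p).map ((insert y T).orderEmbOfFin hT').toEmbedding := by
      ext z
      simp only [Finset.mem_filter, Finset.mem_map, Finset.mem_Iio]
      constructor
      · rintro ⟨hz, hzy⟩
        obtain ⟨q, hq⟩ : z ∈ Set.range ((insert y T).orderEmbOfFin hT') := by
          rw [Finset.range_orderEmbOfFin]; simp [hz]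
        refine ⟨q, ?_, hq⟩
        have h5 := (hq.trans_lt hzy).trans_eq hp.symm
        simpa using h5
      · rintro ⟨q, hq, rfl⟩
        have h1 : (insert y T).orderEmbOfFin hT' q < y := by
          conv_rhs => rw [← hp]
          simpa using hq
        have h2 := Finset.orderEmbOfFin_mem (insert y T) hT' q
        rw [Finset.mem_insert] at h2
        exact ⟨h2.resolve_left h1.ne, h1⟩
    rw [this, Finset.card_map, Fin.card_Iio]
  · have h : (fun i => (insert y T).orderEmbOfFin hT' (p.succAbove i)) = T.orderEmbOfFin hT := by
      apply Finset.orderEmbOfFin_unique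
      · intro i
        have h2 := Finset.orderEmbOfFin_mem (insert y T) hT' (p.succAbove i)
        rw [Finset.mem_insert] at h2
        refine h2.resolve_left fun h3 => ?_
        have h4 := h3.trans hp.symm
        exact Fin.succAbove_ne p i (((insert y T).orderEmbOfFin hT').injective h4)
      · exact ((insert y T).orderEmbOfFin hT').strictMono.comp (Fin.strictMono_succAbove p)
    ext j
    cases j using Fin.succAboveCases p with
    | x => rw [Fin.insertNth_apply_same, hp]
    | p i => rw [Fin.insertNth_apply_succAbove, ← h]

theorem plucker_eq {m n : ℕ} (A : Matrix (Fin (m+2)) (Fin n) ℂ) (S : Finset (Fin n))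
    (hS : S.card = m) (x y : Fin n) (hxy : x < y) (hx : x ∉ S) (hy : y ∉ S) :
    pluckerFin (m+2) n A (insert x (insert y S)) =
      - ((-1) ^ (S.filter (· < x)).card * (-1) ^ (S.filter (· < y)).card) *
      colMinor A (Fin.cons y (Fin.cons x (S.orderEmbOfFin hS) : Fin (m+1) → Fin n)) := by
  have hT : (insert y S).card = m + 1 := by rw [Finset.card_insert_of_notMem hy, hS]
  have hx' : x ∉ insert y S := by simp [hxy.ne, hx]
  have hU : (insert x (insert y S)).card = m + 1 + 1 := by
    rw [Finset.card_insert_of_notMem hx', hT]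
  obtain ⟨q, hq, hq'⟩ := enum_insert S y hy hS hT
  obtain ⟨p, hp, hp'⟩ := enum_insert (insert y S) x hx' hT hU
  have e : pluckerFin (m+2) n A (insert x (insert y S))
      = colMinor A ((insert x (insert y S)).orderEmbOfFin hU) := by
    unfold pluckerFin
    rw [dif_pos hU]
    rfl
  rw [Finset.filter_insert, if_neg (not_lt.2 hxy.le)] at hp
  rw [e, hp', colMinor_insertNth, hq', ← Fin.insertNth_succ_cons, colMinor_insertNth, hp,
    Fin.val_succ, hq]
  ring

/-- the three-term Plücker relation for maximal minors. -/
theorem plucker_three_term_relation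
    (r n : ℕ) (hr : 2 ≤ r) (hrn : r ≤ n)
    (A : Matrix (Fin r) (Fin n) ℂ)
    (S : Finset (Fin n)) (hS : S.card = r - 2)
    (a b c d : Fin n) (hab : a < b) (hbc : b < c) (hcd : c < d)
    (ha : a ∉ S) (hb : b ∉ S) (hc : c ∉ S) (hd : d ∉ S) :
    pluckerFin r n A (insert a (insert c S)) * pluckerFin r n A (insert b (insert d S)) =
      pluckerFin r n A (insert a (insert b S)) * pluckerFin r n A (insert c (insert d S)) +
      pluckerFin r n A (insert b (insert c S)) * pluckerFin r n A (insert a (insert d S)) := by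
  obtain ⟨m, rfl⟩ : ∃ m, r = m + 2 := ⟨r - 2, by omega⟩
  have hS' : S.card = m := by omega
  rw [plucker_eq A S hS' a c (hab.trans hbc) ha hc, plucker_eq A S hS' b d (hbc.trans hcd) hb hd,
    plucker_eq A S hS' a b hab ha hb, plucker_eq A S hS' c d hcd hc hd,
    plucker_eq A S hS' b c hbc hb hc,
    plucker_eq A S hS' a d (hab.trans (hbc.trans hcd)) ha hd]
  have h := colMinor_three A (S.orderEmbOfFin hS')
    (fun x y => colMinor A (Fin.cons x (Fin.cons y (S.orderEmbOfFin hS') : Fin (m+1) → Fin n)))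
    (fun _ _ => rfl) d c b a
  linear_combination ((-1) ^ (S.filter (· < a)).card * (-1) ^ (S.filter (· < b)).card *
    (-1) ^ (S.filter (· < c)).card * (-1) ^ (S.filter (· < d)).card) * h
end
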